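/- For every positive integer k there exist constants C, D > 0 depending only on k with the following property: let ε > 0 and let B_1, …, B_r : G_1 × ⋯ × G_k → H be multiaffine maps into a finite-dimensional 𝔽-vector space H. For each λ ∈ 𝔽^r let Z_λ = {x ∈ G_1 × ⋯ × G_k : Σ_{i∈[r]} λ_i B_i(x) = 0}. Then there exist s ≤ C·(r·log_{|𝔽|}(|𝔽|·ε^{-1}))^D and a multiaffine map β : G_1 × ⋯ × G_k → 𝔽^s such that for each λ ∈ 𝔽^r the layers of β internally ε-approximate Z_λ. -/

import Mathlib

/-- A map `f : G 0 × ⋯ × G (k-1) → H` between `𝔽`-vector spaces is *multiaffine*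
if it is affine in each coordinate separately, i.e. fixing all coordinates but the
`i`-th one yields a map of the form `y ↦ g y + h` with `g` linear. -/
def IsMultiaffine (𝔽 : Type*) [Field 𝔽] {ι : Type*} [DecidableEq ι] {G : ι → Type*}
    [∀ i, AddCommGroup (G i)] [∀ i, Module 𝔽 (G i)]
    {H : Type*} [AddCommGroup H] [Module 𝔽 H] (f : (∀ i, G i) → H) : Prop :=
  ∀ (i : ι) (x : ∀ j, G j), ∃ (g : G i →ₗ[𝔽] H) (h : H),
    ∀ y : G i, f (Function.update x i y) = g y + h

set_option linter.unusedSectionVars false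
set_option linter.unusedSimpArgs false
set_option linter.unusedVariables false
set_option linter.style.longLine false

namespace IAV

section Tensor
open Function
variable {ι : Type} [Fintype ι] [DecidableEq ι] {N : ι → Type} [∀ i, Fintype (N i)]
  [∀ i, DecidableEq (N i)] {M : Type} {K : Type} [Field K]

/-- The multilinear map with coefficient tensor `c`, over a `K`-algebra `R`. -/
noncomputable def T (c : (∀ i, N i) → M → K) (R : Type) [CommRing R] [Algebra K R] :
    MultilinearMap R (fun i => N i → R) (M → R) :=
  ∑ e : (∀ i, N i), ((MultilinearMap.mkPiAlgebra R ι R).compLinearMap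
    (fun i => LinearMap.proj (e i))).smulRight (fun h => algebraMap K R (c e h))

theorem T_apply (c : (∀ i, N i) → M → K) (R : Type) [CommRing R] [Algebra K R]
    (x : ∀ i, N i → R) (h : M) :
    T c R x h = ∑ e : (∀ i, N i), (∏ i, x i (e i)) * algebraMap K R (c e h) := by
  simp [T, Finset.sum_apply]

theorem T_map (c : (∀ i, N i) → M → K) {R R' : Type} [CommRing R] [Algebra K R]
    [CommRing R'] [Algebra K R'] (f : R →ₐ[K] R') (x : ∀ i, N i → R) (h : M) :
    f (T c R x h) = T c R' (fun i e => f (x i e)) h := by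
  simp [T_apply, map_sum, map_mul, map_prod]

theorem T_expand (c : (∀ i, N i) → M → K) {R : Type} [CommRing R] [Algebra K R]
    (x : ∀ i, N i → R) (i : ι) (y : N i → R) (h : M) :
    T c R (update x i y) h = ∑ e, y e * T c R (update x i (Pi.single e 1)) h := by
  have hy : y = ∑ e, y e • (Pi.single e (1:R) : N i → R) := by
    ext e; simp [Finset.sum_apply, Pi.single_apply]
  conv_lhs => rw [hy]
  rw [(T c R).map_update_sum]
  simp [Finset.sum_apply, (T c R).map_update_smul]

/-- scaling -/
theorem T_smul (c : (∀ i, N i) → M → K) {R : Type} [CommRing R] [Algebra K R]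
    (x : ∀ i, N i → R) (s : ι → R) (h : M) :
    T c R (fun i e => s i * x i e) h = (∏ i, s i) * T c R x h := by
  have := (T c R).map_smul_univ s x
  have h2 := congrFun this h
  rw [Pi.smul_apply, smul_eq_mul] at h2
  exact h2

/-- bordered minor identity -/
theorem bordered {m n : Type} {P : Type} [CommRing P] [IsDomain P] (F : m → n → P) (ρ : ℕ)
    (rows : Fin ρ → m) (cols : Fin ρ → n)
    (hz : ∀ (r : Fin (ρ+1) → m) (s : Fin (ρ+1) → n),
      (Matrix.of fun j l => F (r j) (s l)).det = 0)
    (hA : (Matrix.of fun j l => F (rows j) (cols l)).det ≠ 0) (h : m) (e : n) :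
    (Matrix.of fun j l => F (rows j) (cols l)).det * F h e =
      ∑ l, F h (cols l) * ∑ j, (Matrix.of fun j l => F (rows j) (cols l)).adjugate l j
        * F (rows j) e := by
  set A : Matrix (Fin ρ) (Fin ρ) P := Matrix.of fun j l => F (rows j) (cols l) with hAdef
  let B : Matrix (Fin ρ) (Fin 1) P := Matrix.of fun j _ => F (rows j) e
  let C : Matrix (Fin 1) (Fin ρ) P := Matrix.of fun _ l => F h (cols l)
  let D : Matrix (Fin 1) (Fin 1) P := Matrix.of fun _ _ => F h e
  have h0 : (Matrix.fromBlocks A B C D).det = 0 := by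
    have := hz (Fin.append rows (fun _ : Fin 1 => h)) (Fin.append cols (fun _ : Fin 1 => e))
    rw [← Matrix.det_submatrix_equiv_self (finSumFinEquiv (m := ρ) (n := 1))] at this
    rw [← this]
    congr 1
    ext a b
    rcases a with a | a <;> rcases b with b | b <;> simp [A, B, C, D]
  -- multiply by block matrix
  have h1 : (Matrix.fromBlocks A B C D) *
      (Matrix.fromBlocks A.adjugate (-(A.adjugate * B)) 0 (A.det • (1 : Matrix (Fin 1) (Fin 1) P)))
      = Matrix.fromBlocks (A.det • 1) 0 (C * A.adjugate) (A.det • D - C * (A.adjugate * B)) := by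
    rw [Matrix.fromBlocks_multiply]
    congr 1
    · simp [Matrix.mul_adjugate]
    · rw [Matrix.mul_neg, ← Matrix.mul_assoc, Matrix.mul_adjugate]; simp
    · simp
    · simp [sub_eq_neg_add]
  have h2 := congrArg Matrix.det h1
  rw [Matrix.det_mul, h0, zero_mul, Matrix.det_fromBlocks_zero₁₂] at h2
  have h3 : (A.det • (1 : Matrix (Fin ρ) (Fin ρ) P)).det ≠ 0 := by
    simp [Matrix.det_smul, hA]
  have h4 := (mul_eq_zero.1 h2.symm).resolve_left h3
  simp only [Matrix.det_unique, Matrix.sub_apply, Matrix.smul_apply, D, smul_eq_mul] at h4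
  have h5 := sub_eq_zero.1 h4
  simpa [Matrix.mul_apply, B, C] using h5

end Tensor
end IAV

namespace IAV
section Walk
open Function
variable {ι : Type} [Fintype ι] [DecidableEq ι] {N : ι → Type} [∀ i, Fintype (N i)]
  [∀ i, DecidableEq (N i)] {M : Type} {K : Type} [Field K] [Fintype K] [DecidableEq K]

/-- averaging identity -/
theorem sum_update {ι : Type} [Fintype ι] [DecidableEq ι] {Y : ι → Type} [∀ i, Fintype (Y i)]
    (i : ι) (f : (∀ i, Y i) → ℝ) :
    ∑ x, ∑ v : Y i, f (update x i v) = Fintype.card (Y i) * ∑ x, f x := by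
  have h1 : ∑ x : (∀ i, Y i), ∑ v : Y i, f (update x i v) =
      ∑ p : (∀ i, Y i) × Y i, f (update p.1 i p.2) := by
    rw [Fintype.sum_prod_type]
  let e : (∀ i, Y i) × Y i ≃ (∀ i, Y i) × Y i :=
    { toFun := fun p => (update p.1 i p.2, p.1 i)
      invFun := fun p => (update p.1 i p.2, p.1 i)
      left_inv := fun p => by simp
      right_inv := fun p => by simp }
  rw [h1]
  have h2 := Equiv.sum_comp e (fun p => f p.1)
  rw [show ∑ p : (∀ i, Y i) × Y i, f (update p.1 i p.2) = ∑ p, (fun p => f p.1) (e p) from rfl, h2,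
    Fintype.sum_prod_type]
  simp [Finset.mul_sum]

open scoped Classical in
/-- the kernel in coordinate `i` -/
noncomputable def kerF (c : (∀ i, N i) → M → K) (x : ∀ i, N i → K) (i : ι) : Finset (N i → K) :=
  Finset.univ.filter (fun v => T c K (update x i v) = 0)

theorem mem_kerF (c : (∀ i, N i) → M → K) (x : ∀ i, N i → K) (i : ι) (v : N i → K) :
    v ∈ kerF c x i ↔ T c K (update x i v) = 0 := by simp [kerF]

theorem kerF_update (c : (∀ i, N i) → M → K) (x : ∀ i, N i → K) (i : ι) (v : N i → K) :
    kerF c (update x i v) i = kerF c x i := by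
  ext w; simp [mem_kerF]

theorem zero_mem_kerF (c : (∀ i, N i) → M → K) (x : ∀ i, N i → K) (i : ι) :
    0 ∈ kerF c x i := by
  rw [mem_kerF]; exact (T c K).map_update_zero x i

theorem kerF_pos (c : (∀ i, N i) → M → K) (x : ∀ i, N i → K) (i : ι) :
    (0:ℝ) < (kerF c x i).card := by
  exact_mod_cast Finset.card_pos.2 ⟨0, zero_mem_kerF c x i⟩

/-- one walk step -/
noncomputable def W (c : (∀ i, N i) → M → K) (i : ι) (φ : (∀ i, N i → K) → ℝ)
    (x : ∀ i, N i → K) : ℝ :=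
  (∑ v ∈ kerF c x i, φ (update x i v)) / (kerF c x i).card

/-- the walk -/
noncomputable def Walk (c : (∀ i, N i) → M → K) : List ι → ((∀ i, N i → K) → ℝ) →
    (∀ i, N i → K) → ℝ
  | [], φ => φ
  | i :: l, φ => Walk c l (W c i φ)

theorem W_nonneg (c : (∀ i, N i) → M → K) (i : ι) (φ : (∀ i, N i → K) → ℝ)
    (h : ∀ x, 0 ≤ φ x) (x : ∀ i, N i → K) : 0 ≤ W c i φ x :=
  div_nonneg (Finset.sum_nonneg fun v _ => h _) (Nat.cast_nonneg _)

theorem Walk_nonneg (c : (∀ i, N i) → M → K) (l : List ι) : ∀ (φ : (∀ i, N i → K) → ℝ)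
    (h : ∀ x, 0 ≤ φ x) (x : ∀ i, N i → K), 0 ≤ Walk c l φ x := by
  induction l with
  | nil => intro φ h x; exact h x
  | cons i l ih => intro φ h x; exact ih _ (W_nonneg c i φ h) x

open scoped Classical in
/-- the zero set -/
noncomputable def ZF (c : (∀ i, N i) → M → K) : Finset (∀ i, N i → K) :=
  Finset.univ.filter (fun x => T c K x = 0)

open scoped Classical in
theorem sum_ZF (c : (∀ i, N i) → M → K) (i : ι) (φ : (∀ i, N i → K) → ℝ) :
    Fintype.card (N i → K) * ∑ x ∈ ZF c, φ x = ∑ x, ∑ v ∈ kerF c x i, φ (update x i v) := by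
  unfold ZF
  rw [Finset.sum_filter, ← sum_update (Y := fun i => N i → K) i
    (fun a => if T c K a = 0 then φ a else 0)]
  refine Finset.sum_congr rfl fun x _ => ?_
  rw [kerF, Finset.sum_filter]

theorem sum_W (c : (∀ i, N i) → M → K) (i : ι) (φ : (∀ i, N i → K) → ℝ) :
    ∑ x ∈ ZF c, W c i φ x = ∑ x ∈ ZF c, φ x := by
  have hc : (0:ℝ) < Fintype.card (N i → K) := by exact_mod_cast Fintype.card_pos
  apply mul_left_cancel₀ hc.ne'
  rw [sum_ZF, sum_ZF]
  refine Finset.sum_congr rfl fun x _ => ?_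
  have : ∀ v ∈ kerF c x i, W c i φ (update x i v) = W c i φ x := by
    intro v _; simp [W, kerF_update]
  rw [Finset.sum_congr rfl this, Finset.sum_const, nsmul_eq_mul, W,
    mul_div_cancel₀ _ (kerF_pos c x i).ne']

theorem sum_Walk (c : (∀ i, N i) → M → K) (l : List ι) : ∀ (φ : (∀ i, N i → K) → ℝ),
    ∑ x ∈ ZF c, Walk c l φ x = ∑ x ∈ ZF c, φ x := by
  induction l with
  | nil => intro φ; rfl
  | cons i l ih => intro φ; rw [Walk, ih, sum_W]

open scoped Classical in
/-- indicator of a small kernel -/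
noncomputable def Bad (c : (∀ i, N i) → M → K) (d : ℕ) (i : ι) (x : ∀ i, N i → K) : ℝ :=
  if (kerF c x i).card * Fintype.card K ^ (d+1) ≤ Fintype.card (N i → K) then 1 else 0

theorem Bad_nonneg (c : (∀ i, N i) → M → K) (d : ℕ) (i : ι) (x : ∀ i, N i → K) :
    0 ≤ Bad c d i x := by unfold Bad; split_ifs <;> norm_num

theorem sum_Bad (c : (∀ i, N i) → M → K) (d : ℕ) (i : ι) :
    (∑ x ∈ ZF c, Bad c d i x) * (Fintype.card K:ℝ) ^ (d+1) ≤
      Fintype.card (∀ i, N i → K) := by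
  have hc : (0:ℝ) < Fintype.card (N i → K) := by exact_mod_cast Fintype.card_pos
  apply le_of_mul_le_mul_left _ hc
  rw [← mul_assoc, sum_ZF, Finset.sum_mul]
  calc _ ≤ ∑ x : (∀ i, N i → K), (Fintype.card (N i → K) : ℝ) := by
        refine Finset.sum_le_sum fun x _ => ?_
        have : ∀ v ∈ kerF c x i, Bad c d i (update x i v) = Bad c d i x := by
          intro v _; simp [Bad, kerF_update]
        rw [Finset.sum_congr rfl this, Finset.sum_const, nsmul_eq_mul, Bad]
        split_ifs with h
        · rw [mul_one]; exact_mod_cast h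
        · simp
    _ = _ := by rw [Finset.sum_const, nsmul_eq_mul, mul_comm]; rfl

/-- accumulated badness -/
noncomputable def SB (c : (∀ i, N i) → M → K) (d : ℕ) : List ι → (∀ i, N i → K) → ℝ
  | [], _ => 0
  | i :: l, a => Walk c l (Bad c d i) a + SB c d l a

theorem SB_nonneg (c : (∀ i, N i) → M → K) (d : ℕ) (l : List ι) (a : ∀ i, N i → K) :
    0 ≤ SB c d l a := by
  induction l with
  | nil => exact le_rfl
  | cons i l ih => exact add_nonneg (Walk_nonneg c l _ (Bad_nonneg c d i) a) ih

theorem sum_SB (c : (∀ i, N i) → M → K) (d : ℕ) (l : List ι) :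
    (∑ a ∈ ZF c, SB c d l a) * (Fintype.card K:ℝ) ^ (d+1) ≤
      l.length * Fintype.card (∀ i, N i → K) := by
  induction l with
  | nil => simp [SB]
  | cons i l ih =>
    simp only [SB, Finset.sum_add_distrib, sum_Walk, add_mul, List.length_cons, Nat.cast_add,
      Nat.cast_one, one_mul]
    rw [add_comm]
    exact add_le_add ih (sum_Bad c d i)

theorem exists_good (c : (∀ i, N i) → M → K) (d : ℕ) (l : List ι)
    (hq : 2 * l.length < Fintype.card K)
    (hZ : Fintype.card (∀ i, N i → K) ≤ (ZF c).card * Fintype.card K ^ d) :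
    ∃ a ∈ ZF c, SB c d l a < 1/2 := by
  by_contra! hcon
  have h1 := sum_SB c d l
  have h2 : ((ZF c).card : ℝ) * (1/2) ≤ ∑ a ∈ ZF c, SB c d l a := by
    rw [← nsmul_eq_mul]
    exact Finset.card_nsmul_le_sum _ _ _ hcon
  have hq0 : (0:ℝ) < Fintype.card K := by exact_mod_cast Fintype.card_pos
  have hX : (0:ℝ) < Fintype.card (∀ i, N i → K) := by exact_mod_cast Fintype.card_pos
  have hZ' : (Fintype.card (∀ i, N i → K):ℝ) ≤ (ZF c).card * (Fintype.card K:ℝ) ^ d := by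
    exact_mod_cast hZ
  have hq' : (2:ℝ) * l.length < Fintype.card K := by exact_mod_cast hq
  have h3 : ((ZF c).card : ℝ) * (1/2) * (Fintype.card K:ℝ) ^ (d+1) ≤
      l.length * Fintype.card (∀ i, N i → K) :=
    le_trans (mul_le_mul_of_nonneg_right h2 (by positivity)) h1
  have h4 : (Fintype.card (∀ i, N i → K):ℝ) * Fintype.card K
      ≤ (ZF c).card * (Fintype.card K:ℝ) ^ (d+1) := by
    rw [pow_succ, ← mul_assoc]; exact mul_le_mul_of_nonneg_right hZ' hq0.le
  nlinarith

end Walk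

section SZ
variable {K : Type} [Field K] [Fintype K] [DecidableEq K]
open MvPolynomial
theorem sz {σ : Type} [Fintype σ] [DecidableEq σ] (p : MvPolynomial σ K) (hp : p ≠ 0)
    (hd : 2 * p.totalDegree ≤ Fintype.card K) :
    (Fintype.card (σ → K) : ℝ) ≤
      2 * ((Finset.univ.filter fun u : σ → K => eval u p ≠ 0).card : ℝ) := by
  let e := Fintype.equivFin σ
  have hp' : rename e p ≠ 0 := by
    intro h; apply hp; exact rename_injective e e.injective (by simpa using h)
  have h := schwartz_zippel_totalDegree hp' (Finset.univ : Finset K)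
  have hq0 : 0 < Fintype.card K := Fintype.card_pos
  have hdeg : (rename e p).totalDegree ≤ p.totalDegree := totalDegree_rename_le _ _
  have hcard : (Finset.filter (fun f : Fin (Fintype.card σ) → K => eval f (rename e p) = 0)
      (Fintype.piFinset fun _ => Finset.univ)).card
      = (Finset.univ.filter fun u : σ → K => eval u p = 0).card := by
    apply Finset.card_bij (fun f _ => f ∘ e)
    · intro f hf; simpa [eval_rename] using hf
    · intro f _ g _ h; ext x; have := congrFun h (e.symm x); simpa using this
    · intro u hu
      refine ⟨u ∘ e.symm, ?_, ?_⟩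
      · simp only [Finset.mem_filter, Finset.mem_univ, true_and] at hu
        simp [eval_rename, Function.comp_assoc, hu]
      · ext x; simp
  rw [hcard] at h
  have h' : (((Finset.univ.filter fun u : σ → K => eval u p = 0).card : ℚ≥0) : ℝ) /
      (((Fintype.card K : ℕ) : ℚ≥0) : ℝ) ^ (Fintype.card σ) ≤
      (((rename e p).totalDegree : ℚ≥0) : ℝ) / (((Fintype.card K : ℕ) : ℚ≥0) : ℝ) := by
    exact_mod_cast h
  simp only [NNRat.cast_natCast] at h'
  have hq0' : (0:ℝ) < Fintype.card K := by exact_mod_cast hq0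
  have h2 : ((rename e p).totalDegree : ℝ) / (Fintype.card K : ℝ) ≤ 1/2 := by
    rw [div_le_div_iff₀ hq0' (by norm_num)]
    have : (2 * (rename e p).totalDegree) ≤ Fintype.card K := le_trans (by omega) hd
    have : (2 * (rename e p).totalDegree : ℝ) ≤ Fintype.card K := by exact_mod_cast this
    linarith
  have h3 := h'.trans h2
  rw [div_le_iff₀ (by positivity)] at h3
  have h4 := Finset.card_filter_add_card_filter_not (s := (Finset.univ : Finset (σ → K)))
    (fun u : σ → K => eval u p = 0)
  have h5 : (Fintype.card (σ → K) : ℝ) = (Fintype.card K : ℝ) ^ (Fintype.card σ) := by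
    simp [Fintype.card_fun]
  rw [Finset.card_univ] at h4
  have h6 : ((Finset.univ.filter fun u : σ → K => eval u p = 0).card : ℝ) +
     ((Finset.univ.filter fun u : σ → K => ¬ eval u p = 0).card : ℝ) = Fintype.card (σ → K) := by
    exact_mod_cast h4
  simp only [ne_eq]
  linarith
end SZ
end IAV

namespace IAV
section Proj
open Function
variable {ι : Type} [Fintype ι] [DecidableEq ι] {N : ι → Type} [∀ i, Fintype (N i)]
  [∀ i, DecidableEq (N i)] {M : Type} {K : Type} [Field K]
  (c : (∀ i, N i) → M → K) {R : Type} [CommRing R] [Algebra K R]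
   {R' : Type} [CommRing R'] [Algebra K R']

theorem T_congr {x x' : ∀ i, N i → R} (hx : x = x') (h : M) : T c R x h = T c R x' h := by
  rw [hx]

/-- the matrix of the slice at coordinate `i` -/
noncomputable def Fm (y : ∀ i, N i → R) (i : ι) (h : M) (e : N i) : R :=
  T c R (update y i (Pi.single e 1)) h

/-- a minor matrix -/
noncomputable def Mi (y : ∀ i, N i → R) (i : ι) {ρ : ℕ} (rows : Fin ρ → M) (cols : Fin ρ → N i) :
    Matrix (Fin ρ) (Fin ρ) R :=
  Matrix.of fun j l => Fm c y i (rows j) (cols l)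

/-- projection to the kernel -/
noncomputable def proj (y : ∀ i, N i → R) (i : ι) {ρ : ℕ} (rows : Fin ρ → M) (cols : Fin ρ → N i)
    (v : N i → R) : N i → R := fun e =>
  (Mi c y i rows cols).det * v e - ∑ l, (if e = cols l then (1:R) else 0) *
    ∑ j, (Mi c y i rows cols).adjugate l j * T c R (update y i v) (rows j)

theorem update_map (f : R →ₐ[K] R') (y : ∀ i, N i → R) (i : ι) (v : N i → R) :
    (fun j e => f (update y i v j e)) = update (fun j e => f (y j e)) i (fun e => f (v e)) := by
  funext j
  by_cases h : j = i
  · subst h; simp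
  · simp [update_of_ne h]

theorem Fm_map (f : R →ₐ[K] R') (y : ∀ i, N i → R) (i : ι) (h : M) (e : N i) :
    f (Fm c y i h e) = Fm c (fun j e => f (y j e)) i h e := by
  rw [Fm, T_map, Fm, update_map]
  refine T_congr c ?_ h
  congr 1
  funext e'
  by_cases h : e' = e
  · subst h; simp
  · simp [h]

theorem Mi_map (f : R →ₐ[K] R') (y : ∀ i, N i → R) (i : ι) {ρ : ℕ} (rows : Fin ρ → M)
    (cols : Fin ρ → N i) :
    (Mi c y i rows cols).map f = Mi c (fun j e => f (y j e)) i rows cols := by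
  ext j l; simp [Mi, Fm_map]

theorem det_Mi_map (f : R →ₐ[K] R') (y : ∀ i, N i → R) (i : ι) {ρ : ℕ} (rows : Fin ρ → M)
    (cols : Fin ρ → N i) :
    f (Mi c y i rows cols).det = (Mi c (fun j e => f (y j e)) i rows cols).det := by
  rw [← Mi_map]; exact AlgHom.map_det f _

theorem proj_map (f : R →ₐ[K] R') (y : ∀ i, N i → R) (i : ι) {ρ : ℕ} (rows : Fin ρ → M)
    (cols : Fin ρ → N i) (v : N i → R) (e : N i) :
    f (proj c y i rows cols v e) =
      proj c (fun j e => f (y j e)) i rows cols (fun e => f (v e)) e := by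
  have hadj : ∀ l j, f ((Mi c y i rows cols).adjugate l j) =
      (Mi c (fun j e => f (y j e)) i rows cols).adjugate l j := by
    intro l j
    rw [← Mi_map]
    have := congrFun (congrFun (AlgHom.map_adjugate f (Mi c y i rows cols)) l) j
    simpa using this
  unfold proj
  simp only [map_sub, map_mul, map_sum, det_Mi_map, hadj, T_map, update_map]
  congr 1
  refine Finset.sum_congr rfl fun l _ => ?_
  congr 1
  split_ifs <;> simp

theorem T_proj (y : ∀ i, N i → R) (i : ι) {ρ : ℕ} (rows : Fin ρ → M)
    (cols : Fin ρ → N i) (v : N i → R)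
    (hb : ∀ h e, (Mi c y i rows cols).det * Fm c y i h e =
      ∑ l, Fm c y i h (cols l) * ∑ j, (Mi c y i rows cols).adjugate l j * Fm c y i (rows j) e) :
    T c R (update y i (proj c y i rows cols v)) = 0 := by
  ext h
  rw [T_expand]
  have hT : ∀ h, T c R (update y i v) h = ∑ e, v e * Fm c y i h e := fun h => T_expand c y i v h
  simp only [proj, sub_mul, Finset.sum_sub_distrib, Pi.zero_apply, hT]
  rw [sub_eq_zero]
  calc _ = ∑ e, v e * ((Mi c y i rows cols).det * Fm c y i h e) := by
        refine Finset.sum_congr rfl fun e _ => ?_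
        rw [Fm]; ring
    _ = ∑ e, v e * ∑ l, Fm c y i h (cols l) * ∑ j, (Mi c y i rows cols).adjugate l j
          * Fm c y i (rows j) e := by simp only [hb]
    _ = ∑ l, Fm c y i h (cols l) * ∑ j, (Mi c y i rows cols).adjugate l j
          * ∑ e, v e * Fm c y i (rows j) e := by
        simp only [Finset.mul_sum]
        rw [Finset.sum_comm]
        refine Finset.sum_congr rfl fun l _ => ?_
        rw [Finset.sum_comm]
        refine Finset.sum_congr rfl fun j _ => Finset.sum_congr rfl fun e _ => ?_
        ring
    _ = _ := by
        simp only [Finset.sum_mul (s := (Finset.univ : Finset (Fin ρ)))]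
        rw [Finset.sum_comm]
        refine Finset.sum_congr rfl fun l _ => ?_
        rw [Finset.sum_eq_single (cols l)]
        · rw [if_pos rfl, one_mul, mul_comm]; simp only [Fm, Finset.sum_mul]
        · intro e _ he; simp [he]
        · simp

theorem proj_of_eq_zero (y : ∀ i, N i → R) (i : ι) {ρ : ℕ} (rows : Fin ρ → M)
    (cols : Fin ρ → N i) (v : N i → R) (hv : ∀ j, T c R (update y i v) (rows j) = 0) (e : N i) :
    proj c y i rows cols v e = (Mi c y i rows cols).det * v e := by
  simp [proj, hv]

theorem proj_add (y : ∀ i, N i → R) (i : ι) {ρ : ℕ} (rows : Fin ρ → M)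
    (cols : Fin ρ → N i) (v w : N i → R) :
    proj c y i rows cols (v + w) = proj c y i rows cols v + proj c y i rows cols w := by
  ext e
  simp only [proj, Pi.add_apply, (T c R).map_update_add, mul_add, Finset.sum_add_distrib]
  ring

theorem Fm_congr (y y' : ∀ i, N i → R) (i : ι) (hy : ∀ j, j ≠ i → y j = y' j) :
    Fm c y i = Fm c y' i := by
  ext h e
  unfold Fm
  refine T_congr c ?_ h
  funext j
  by_cases hj : j = i
  · subst hj; simp
  · simp [update_of_ne hj, hy j hj]

theorem Mi_congr (y y' : ∀ i, N i → R) (i : ι) (hy : ∀ j, j ≠ i → y j = y' j) {ρ : ℕ}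
    (rows : Fin ρ → M) (cols : Fin ρ → N i) : Mi c y i rows cols = Mi c y' i rows cols := by
  simp only [Mi, Fm_congr c y y' i hy]

theorem T_update_scale (y : ∀ i, N i → R) (s : ι → R) (i : ι) (hs : s i = 1) (v : N i → R)
    (h : M) : T c R (update (fun j e => s j * y j e) i v) h =
      (∏ j, s j) * T c R (update y i v) h := by
  rw [← T_smul]
  refine T_congr c ?_ h
  funext j
  by_cases hj : j = i
  · subst hj; simp [hs]
  · simp [update_of_ne hj]

theorem det_Mi_scale (y : ∀ i, N i → R) (s : ι → R) (i : ι) (hs : s i = 1) {ρ : ℕ}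
    (rows : Fin ρ → M) (cols : Fin ρ → N i) :
    (Mi c (fun j e => s j * y j e) i rows cols).det =
      (∏ j, s j) ^ ρ * (Mi c y i rows cols).det := by
  have : Mi c (fun j e => s j * y j e) i rows cols = (∏ j, s j) • Mi c y i rows cols := by
    ext j l
    simp [Mi, Fm, T_update_scale c y s i hs]
  rw [this, Matrix.det_smul]; simp

end Proj

section Fin
open Function
variable {ι : Type} [Fintype ι] [DecidableEq ι] {N : ι → Type} [∀ i, Fintype (N i)]
  [∀ i, DecidableEq (N i)] {M : Type} {K : Type} [Field K] [Fintype K] [DecidableEq K]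
  (c : (∀ i, N i) → M → K)

theorem ker_bound (y : ∀ i, N i → K) (i : ι) {ρ : ℕ} (rows : Fin ρ → M)
    (cols : Fin ρ → N i) (hdet : (Mi c y i rows cols).det ≠ 0) :
    (kerF c y i).card * Fintype.card K ^ ρ ≤ Fintype.card (N i → K) := by
  have h1 : (kerF c y i).card * Fintype.card K ^ ρ =
      Fintype.card (kerF c y i × (Fin ρ → K)) := by simp
  rw [h1]
  let g : (Fin ρ → K) → (N i → K) := fun t => ∑ l, t l • (Pi.single (cols l) 1 : N i → K)
  have hg : ∀ t j, T c K (update y i (g t)) (rows j) = (Mi c y i rows cols).mulVec t j := by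
    intro t j
    simp only [g, (T c K).map_update_sum, (T c K).map_update_smul, Finset.sum_apply, Pi.smul_apply,
      Matrix.mulVec, dotProduct, Mi, Fm, Matrix.of_apply, smul_eq_mul]
    exact Finset.sum_congr rfl fun l _ => mul_comm _ _
  have hk : ∀ (v : N i → K) t, v ∈ kerF c y i → ∀ j, T c K (update y i (v + g t)) (rows j) =
      (Mi c y i rows cols).mulVec t j := by
    intro v t hv j
    rw [(T c K).map_update_add, Pi.add_apply, (mem_kerF c y i v).1 hv, hg]; simp
  refine Fintype.card_le_of_injective (fun p : kerF c y i × (Fin ρ → K) => p.1.1 + g p.2) ?_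
  rintro ⟨⟨v, hv⟩, t⟩ ⟨⟨v', hv'⟩, t'⟩ h
  simp only at h
  have ht : t = t' := by
    apply Matrix.mulVec_injective_of_isUnit
      ((Matrix.isUnit_iff_isUnit_det (Mi c y i rows cols)).2 hdet.isUnit)
    funext j
    rw [← hk v t hv j, ← hk v' t' hv' j, h]
  subst ht
  simpa using h

theorem avg_ker (y : ∀ i, N i → K) (i : ι) {ρ : ℕ} (rows : Fin ρ → M)
    (cols : Fin ρ → N i) (hdet : (Mi c y i rows cols).det ≠ 0)
    (hb : ∀ v, T c K (update y i (proj c y i rows cols v)) = 0) (φ : (N i → K) → ℝ) :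
    ∑ v : N i → K, φ (proj c y i rows cols v) =
      Fintype.card (N i → K) * ((∑ v ∈ kerF c y i, φ v) / (kerF c y i).card) := by
  rw [← mul_div_assoc, eq_div_iff (kerF_pos c y i).ne']
  have h1 : ∀ w ∈ kerF c y i, ∑ v : N i → K, φ (proj c y i rows cols v) =
      ∑ v : N i → K, φ (proj c y i rows cols v + (Mi c y i rows cols).det • w) := by
    intro w hw
    rw [← Equiv.sum_comp (Equiv.addRight w)]
    refine Finset.sum_congr rfl fun v _ => ?_
    rw [Equiv.coe_addRight, proj_add]
    congr 2
    ext e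
    rw [proj_of_eq_zero]
    · simp
    · intro j; rw [(mem_kerF c y i w).1 hw]; rfl
  have h2 : (∑ v : N i → K, φ (proj c y i rows cols v)) * (kerF c y i).card =
      ∑ w ∈ kerF c y i, ∑ v : N i → K, φ (proj c y i rows cols v +
        (Mi c y i rows cols).det • w) := by
    rw [← Finset.sum_congr rfl h1, Finset.sum_const, nsmul_eq_mul, mul_comm]
  rw [h2, Finset.sum_comm, ← nsmul_eq_mul]
  refine Finset.sum_eq_card_nsmul fun v _ => ?_
  set D := (Mi c y i rows cols).det
  set z := proj c y i rows cols v
  have hz : z ∈ kerF c y i := (mem_kerF _ _ _ _).2 (hb v)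
  have hadd : ∀ (α β : K) p q, p ∈ kerF c y i → q ∈ kerF c y i → α • p + β • q ∈ kerF c y i := by
    intro α β p q hp hq
    rw [mem_kerF] at *
    rw [(T c K).map_update_add, (T c K).map_update_smul, (T c K).map_update_smul, hp, hq]; simp
  refine Finset.sum_bij' (fun w _ => z + D • w) (fun w _ => D⁻¹ • (w - z)) ?_ ?_ ?_ ?_ ?_
  · intro w hw; simpa using hadd 1 D z w hz hw
  · intro w hw; have := hadd D⁻¹ (-D⁻¹) w z hw hz
    convert this using 1
    rw [smul_sub, neg_smul, sub_eq_add_neg]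
  · intro w _; simp [smul_smul, inv_mul_cancel₀ hdet]
  · intro w _; simp [smul_smul, mul_inv_cancel₀ hdet]
  · intro w _; rfl
end Fin
end IAV

namespace IAV
section Deg
open Function MvPolynomial
variable {ι : Type} [Fintype ι] [DecidableEq ι] {N : ι → Type} [∀ i, Fintype (N i)]
  [∀ i, DecidableEq (N i)] {M : Type} {K : Type} [Field K] {τ : Type}
  (c : (∀ i, N i) → M → K)

theorem deg_sum {α : Type} (s : Finset α) (f : α → MvPolynomial τ K) (E : ℕ)
    (h : ∀ a ∈ s, (f a).totalDegree ≤ E) : (∑ a ∈ s, f a).totalDegree ≤ E :=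
  (totalDegree_finsetSum s f).trans (Finset.sup_le h)

theorem deg_T (x : ∀ i, N i → MvPolynomial τ K) (E : ℕ) (hx : ∀ i e, (x i e).totalDegree ≤ E)
    (h : M) : (T c (MvPolynomial τ K) x h).totalDegree ≤ Fintype.card ι * E := by
  rw [T_apply]
  refine deg_sum _ _ _ fun e _ => ?_
  refine (totalDegree_mul _ _).trans ?_
  rw [MvPolynomial.algebraMap_eq, totalDegree_C, add_zero]
  refine (totalDegree_finsetProd _ _).trans ?_
  refine (Finset.sum_le_card_nsmul _ _ E fun i _ => hx i _).trans ?_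
  simp

theorem deg_det {ρ : ℕ} (A : Matrix (Fin ρ) (Fin ρ) (MvPolynomial τ K)) (E : ℕ)
    (hA : ∀ i j, (A i j).totalDegree ≤ E) : A.det.totalDegree ≤ ρ * E := by
  rw [Matrix.det_apply]
  refine deg_sum _ _ _ fun e _ => ?_
  have : ((∏ i, A (e i) i)).totalDegree ≤ ρ * E := by
    refine (totalDegree_finsetProd _ _).trans ?_
    refine (Finset.sum_le_card_nsmul _ _ E fun i _ => hA _ _).trans ?_
    simp
  rcases Int.units_eq_one_or (Equiv.Perm.sign e) with h | h <;> simp [h, this, totalDegree_neg]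

theorem deg_adj {ρ : ℕ} (A : Matrix (Fin ρ) (Fin ρ) (MvPolynomial τ K)) (E : ℕ)
    (hA : ∀ i j, (A i j).totalDegree ≤ E) (i j : Fin ρ) :
    (A.adjugate i j).totalDegree ≤ ρ * E := by
  rw [Matrix.adjugate_apply]
  refine deg_det _ _ fun k l => ?_
  rw [Matrix.updateRow_apply]
  split_ifs
  · rw [Pi.single_apply]; split_ifs <;> simp
  · exact hA _ _

theorem deg_Fm (y : ∀ i, N i → MvPolynomial τ K) (E : ℕ) (hy : ∀ i e, (y i e).totalDegree ≤ E)
    (i : ι) (h : M) (e : N i) : (Fm c y i h e).totalDegree ≤ Fintype.card ι * E := by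
  refine deg_T c _ E (fun j e' => ?_) h
  by_cases hj : j = i
  · subst hj; rw [update_self, Pi.single_apply]; split_ifs <;> simp
  · rw [update_of_ne hj]; exact hy _ _

theorem deg_detMi (y : ∀ i, N i → MvPolynomial τ K) (E : ℕ) (hy : ∀ i e, (y i e).totalDegree ≤ E)
    (i : ι) {ρ : ℕ} (rows : Fin ρ → M) (cols : Fin ρ → N i) :
    (Mi c y i rows cols).det.totalDegree ≤ ρ * (Fintype.card ι * E) :=
  deg_det _ _ fun _ _ => deg_Fm c y E hy _ _ _

theorem deg_proj (y : ∀ i, N i → MvPolynomial τ K) (E : ℕ) (hy : ∀ i e, (y i e).totalDegree ≤ E)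
    (i : ι) {ρ : ℕ} (rows : Fin ρ → M) (cols : Fin ρ → N i) (v : N i → MvPolynomial τ K)
    (hv : ∀ e, (v e).totalDegree ≤ E) (e : N i) :
    (proj c y i rows cols v e).totalDegree ≤ (ρ + 1) * (Fintype.card ι * E) := by
  have hn : 1 ≤ Fintype.card ι := Fintype.card_pos_iff.2 ⟨i⟩
  have hnE : E ≤ Fintype.card ι * E := by nlinarith
  unfold proj
  refine (totalDegree_sub _ _).trans (max_le ?_ ?_)
  · refine (totalDegree_mul _ _).trans ?_
    have := deg_detMi c y E hy i rows cols
    have := hv e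
    linarith
  · refine deg_sum _ _ _ fun l _ => ?_
    refine (totalDegree_mul _ _).trans ?_
    have h0 : (if e = cols l then (1 : MvPolynomial τ K) else 0).totalDegree = 0 := by
      split_ifs <;> simp
    rw [h0, zero_add]
    refine deg_sum _ _ _ fun j _ => ?_
    refine (totalDegree_mul _ _).trans ?_
    have h1 := deg_adj (Mi c y i rows cols) _ (fun _ _ => deg_Fm c y E hy _ _ _) l j
    have h2 := deg_T c (update y i v) E (fun j e' => by
      by_cases hj : j = i
      · subst hj; rw [update_self]; exact hv _
      · rw [update_of_ne hj]; exact hy _ _) (rows j)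
    linarith
end Deg

section Path
open Function MvPolynomial
variable {ι : Type} [Fintype ι] [DecidableEq ι] {N : ι → Type} [∀ i, Fintype (N i)]
  [∀ i, DecidableEq (N i)] {M : Type} {K : Type} [Field K]

/-- evaluation at a tuple -/
noncomputable def ev {R : Type} [CommRing R] [Algebra K R] (w : ∀ i, N i → R) :
    MvPolynomial (Σ i, N i) K →ₐ[K] R := aeval (fun s => w s.1 s.2)

variable (N M) in
/-- data of one step -/
structure Step where
  /-- coordinate -/
  i : ι
  /-- earlier coordinates -/
  pre : Finset ι
  /-- rank -/
  ρ : ℕ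
  /-- rows -/
  rows : Fin ρ → M
  /-- columns -/
  cols : Fin ρ → N i

/-- base point of a step -/
def base (a : ∀ i, N i → K) (st : Step N M) {R : Type} [CommRing R] [Algebra K R]
    (w : ∀ i, N i → R) : ∀ i, N i → R :=
  fun j => if j ∈ st.pre then w j else fun e => algebraMap K R (a j e)

/-- matrix of a step -/
noncomputable def smat (c : (∀ i, N i) → M → K) (a : ∀ i, N i → K) (st : Step N M) {R : Type}
    [CommRing R] [Algebra K R] (w : ∀ i, N i → R) : Matrix (Fin st.ρ) (Fin st.ρ) R :=
  Mi c (base a st w) st.i st.rows st.cols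

/-- equations of a step -/
noncomputable def seqn (c : (∀ i, N i) → M → K) (a : ∀ i, N i → K) (st : Step N M) {R : Type}
    [CommRing R] [Algebra K R] (w : ∀ i, N i → R) (j : Fin st.ρ) : R :=
  T c R (update (base a st w) st.i (w st.i)) (st.rows j)

variable [Fintype K] [DecidableEq K]

/-- generic path -/
structure IsPath (c : (∀ i, N i) → M → K) (a : ∀ i, N i → K) (d : ℕ) (l : List ι)
    (L : List (Step N M)) (b : ∀ i, N i → MvPolynomial (Σ i, N i) K)
    (Δ : MvPolynomial (Σ i, N i) K) : Prop where
  hA : ∀ i, i ∉ l → ∀ e, b i e = C (a i e)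
  degb : ∀ i e, (b i e).totalDegree ≤ (Fintype.card ι * (d+2)) ^ l.length
  degD : Δ.totalDegree ≤ (Fintype.card ι * (d+2)) ^ l.length
  depb : ∀ u u' : (∀ i, N i → K), (∀ i ∈ l, u i = u' i) → ∀ j e, ev u (b j e) = ev u' (b j e)
  depD : ∀ u u' : (∀ i, N i → K), (∀ i ∈ l, u i = u' i) → ev u Δ = ev u' Δ
  hT : T c (MvPolynomial (Σ i, N i) K) b = 0
  hD : Δ ≠ 0
  hE : ∀ φ : (∀ i, N i → K) → ℝ, (∀ x, 0 ≤ φ x) →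
    ∑ u : (∀ i, N i → K), (if ev u Δ ≠ 0 then φ (fun i e => ev u (b i e)) else 0) ≤
      Fintype.card (∀ i, N i → K) * Walk c l φ a
  hF : ∀ (R : Type) [CommRing R] [Algebra K R] (w : ∀ i, N i → R),
    (∀ st ∈ L, (∀ j, seqn c a st w j = 0) ∧ IsUnit (smat c a st w).det) →
    ∀ i ∈ l, ∃ ε : R, IsUnit ε ∧ ∀ e, ev w (b i e) = ε * w i e
  hF2 : ∀ u : (∀ i, N i → K), ev u Δ ≠ 0 → ∀ st ∈ L,
    (∀ j, seqn c a st (fun i e => ev u (b i e)) j = 0) ∧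
      (smat c a st (fun i e => ev u (b i e))).det ≠ 0
  hG : L.length ≤ l.length
  hG2 : ∀ st ∈ L, st.ρ ≤ d ∧ st.i ∈ l ∧ ∀ j ∈ st.pre, j ∈ l

theorem sz' (p : MvPolynomial (Σ i, N i) K) (hp : p ≠ 0)
    (hd : 2 * p.totalDegree ≤ Fintype.card K) :
    (Fintype.card (∀ i, N i → K) : ℝ) ≤
      2 * ∑ u : (∀ i, N i → K), (if ev u p ≠ 0 then (1:ℝ) else 0) := by
  have h := sz p hp hd
  let e : ((Σ i, N i) → K) ≃ (∀ i, N i → K) := Equiv.piCurry (fun i (_ : N i) => K)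
  rw [Fintype.card_congr e] at h
  refine h.trans (le_of_eq ?_)
  rw [← Equiv.sum_comp e, Finset.card_filter]
  push_cast
  rfl

theorem path_nil (c : (∀ i, N i) → M → K) (a : ∀ i, N i → K) (d : ℕ) (ha : T c K a = 0) :
    IsPath c a d [] [] (fun i e => C (a i e)) 1 where
  hA := fun i _ e => rfl
  degb := by simp
  degD := by simp
  depb := by simp [ev]
  depD := by simp
  hT := by
    ext1 h
    have := T_map c (Algebra.ofId K (MvPolynomial (Σ i, N i) K)) a h
    rw [ha] at this
    simpa using this.symm
  hD := one_ne_zero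
  hE := by
    intro φ hφ
    simp [Walk, ev]
  hF := by simp
  hF2 := by simp
  hG := le_rfl
  hG2 := by simp

theorem no_minor (c : (∀ i, N i) → M → K) (a : ∀ i, N i → K) (d : ℕ) (i : ι) (l : List ι)
    (hS : SB c d (i :: l) a < 1/2)
    (hq : 2 * (Fintype.card ι * (d+2)) ^ (l.length + 1) ≤ Fintype.card K)
    (L : List (Step N M)) (b : ∀ i, N i → MvPolynomial (Σ i, N i) K)
    (Δ : MvPolynomial (Σ i, N i) K) (hp : IsPath c a d l L b Δ)
    (rows : Fin (d+1) → M) (cols : Fin (d+1) → N i) : (Mi c b i rows cols).det = 0 := by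
  by_contra hne
  set p := Δ * (Mi c b i rows cols).det with hpdef
  have hp0 : p ≠ 0 := mul_ne_zero hp.hD hne
  have hn : 1 ≤ Fintype.card ι := Fintype.card_pos_iff.2 ⟨i⟩
  have hdeg : p.totalDegree ≤ (Fintype.card ι * (d+2)) ^ (l.length + 1) := by
    refine (totalDegree_mul _ _).trans ?_
    have h1 := hp.degD
    have h2 := deg_detMi c b _ hp.degb i rows cols
    rw [pow_succ]
    set E := (Fintype.card ι * (d+2)) ^ l.length
    have : E ≤ Fintype.card ι * E := by nlinarith
    nlinarith
  have h1 := sz' p hp0 (by omega)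
  have h2 := hp.hE (Bad c d i) (Bad_nonneg c d i)
  have h3 : ∑ u : (∀ i, N i → K), (if ev u p ≠ 0 then (1:ℝ) else 0) ≤
      ∑ u : (∀ i, N i → K), (if ev u Δ ≠ 0 then Bad c d i (fun i e => ev u (b i e)) else 0) := by
    refine Finset.sum_le_sum fun u _ => ?_
    by_cases hu : ev u p = 0
    · rw [if_neg (by simpa using hu)]
      split_ifs
      · exact Bad_nonneg _ _ _ _
      · exact le_rfl
    · rw [if_pos hu]
      rw [hpdef, map_mul, mul_eq_zero, not_or, det_Mi_map] at hu
      rw [if_pos hu.1, Bad, if_pos (ker_bound c _ i rows cols hu.2)]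
  have hX : (0:ℝ) < Fintype.card (∀ i, N i → K) := by exact_mod_cast Fintype.card_pos
  have h4 : Walk c l (Bad c d i) a < 1/2 := by
    rw [SB] at hS
    have := SB_nonneg c d l a
    linarith
  nlinarith

theorem exists_max (d : ℕ) (Q : ℕ → Prop) (h0 : Q 0) (hd : ¬ Q (d+1)) :
    ∃ ρ ≤ d, Q ρ ∧ ¬ Q (ρ+1) := by
  by_contra! h
  have : ∀ n ≤ d + 1, Q n := by
    intro n
    induction n with
    | zero => intro _; exact h0
    | succ n ih => intro hn; exact h n (by omega) (ih (by omega))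
  exact hd (this _ le_rfl)

end Path
end IAV

namespace IAV
section Path
open Function MvPolynomial
variable {ι : Type} [Fintype ι] [DecidableEq ι] {N : ι → Type} [∀ i, Fintype (N i)]
  [∀ i, DecidableEq (N i)] {M : Type} {K : Type} [Field K]

theorem ev_new (c : (∀ i, N i) → M → K) (b : ∀ i, N i → MvPolynomial (Σ i, N i) K) (i : ι)
    {ρ : ℕ} (rows : Fin ρ → M) (cols : Fin ρ → N i)
    {R : Type} [CommRing R] [Algebra K R] (w : ∀ i, N i → R) :
    (fun j e => ev w (update b i (proj c b i rows cols (fun e => X ⟨i, e⟩)) j e)) =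
      update (fun j e => ev w (b j e)) i
        (proj c (fun j e => ev w (b j e)) i rows cols (w i)) := by
  rw [update_map]
  congr 1
  funext e
  rw [proj_map]
  simp [ev]

/-- equations and matrices of a step only depend on some coordinates -/
theorem base_congr (a : ∀ i, N i → K) (st : Step N M) {R : Type} [CommRing R] [Algebra K R]
    (w w' : ∀ i, N i → R) (h : ∀ j ∈ st.pre, w j = w' j) : base a st w = base a st w' := by
  funext j
  unfold base
  split_ifs with hj
  · exact h j hj
  · rfl

variable [Fintype K] [DecidableEq K]

theorem path_cons (c : (∀ i, N i) → M → K) (a : ∀ i, N i → K) (d : ℕ) (i : ι) (l : List ι)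
    (hi : i ∉ l)
    (hS : SB c d (i :: l) a < 1/2)
    (hq : 2 * (Fintype.card ι * (d+2)) ^ (l.length + 1) ≤ Fintype.card K)
    (L : List (Step N M)) (b : ∀ i, N i → MvPolynomial (Σ i, N i) K)
    (Δ : MvPolynomial (Σ i, N i) K) (hp : IsPath c a d l L b Δ) :
    ∃ L' b' Δ', IsPath c a d (i :: l) L' b' Δ' := by
  classical
  obtain ⟨ρ, hρ, ⟨rows, cols, hdet⟩, hmax⟩ := exists_max d
    (fun ρ => ∃ (rows : Fin ρ → M) (cols : Fin ρ → N i), (Mi c b i rows cols).det ≠ 0)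
    ⟨Fin.elim0, Fin.elim0, by simp⟩
    (by
      rintro ⟨rows, cols, h⟩
      exact h (no_minor c a d i l hS hq L b Δ hp rows cols))
  push Not at hmax
  have hb := bordered (Fm c b i) ρ rows cols hmax hdet
  set b' := update b i (proj c b i rows cols (fun e => X ⟨i, e⟩)) with hb'
  set Δi := (Mi c b i rows cols).det with hΔi
  let st : Step N M := ⟨i, l.toFinset, ρ, rows, cols⟩
  have hT' : T c (MvPolynomial (Σ i, N i) K) b' = 0 := T_proj c b i rows cols _ hb
  have fact1 : ∀ (u : ∀ i, N i → K) (v : N i → K),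
      (fun j e => ev (update u i v) (b j e)) = fun j e => ev u (b j e) := by
    intro u v
    funext j e
    apply hp.depb
    intro k hk
    rw [update_of_ne]
    rintro rfl; exact hi hk
  have fact1D : ∀ (u : ∀ i, N i → K) (v : N i → K), ev (update u i v) Δ = ev u Δ := by
    intro u v
    apply hp.depD
    intro k hk
    rw [update_of_ne]
    rintro rfl; exact hi hk
  have fact2 : ∀ {R : Type} [CommRing R] [Algebra K R] (w : ∀ i, N i → R),
      (fun j e => ev w (b' j e)) = update (fun j e => ev w (b j e)) i
        (proj c (fun j e => ev w (b j e)) i rows cols (w i)) := by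
    intro R _ _ w; exact ev_new c b i rows cols w
  have fact3 : ∀ {R : Type} [CommRing R] [Algebra K R] (w : ∀ i, N i → R),
      ev w Δi = (Mi c (fun j e => ev w (b j e)) i rows cols).det := by
    intro R _ _ w; exact det_Mi_map c (ev w) b i rows cols
  have hker : ∀ (u : ∀ i, N i → K) (v : N i → K), T c K (update (fun j e => ev u (b j e)) i
        (proj c (fun j e => ev u (b j e)) i rows cols v)) = 0 := by
    intro u v
    have h1 := fact2 (update u i v)
    rw [fact1, update_self] at h1
    rw [← h1]
    ext h
    rw [← T_map, hT']; simp
  have hpow1 : 1 ≤ (Fintype.card ι * (d+2)) ^ l.length := by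
    apply Nat.one_le_pow
    have hn : 1 ≤ Fintype.card ι := Fintype.card_pos_iff.2 ⟨i⟩
    positivity
  have hn : 1 ≤ Fintype.card ι := Fintype.card_pos_iff.2 ⟨i⟩
  refine ⟨st :: L, b', Δ * Δi, ?_⟩
  refine
    { hA := ?_, degb := ?_, degD := ?_, depb := ?_, depD := ?_, hT := hT',
      hD := mul_ne_zero hp.hD hdet, hE := ?_, hF := ?_, hF2 := ?_, hG := ?_, hG2 := ?_ }
  · intro j hj e
    rw [List.mem_cons, not_or] at hj
    rw [hb', update_of_ne hj.1]
    exact hp.hA j hj.2 e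
  · intro j e
    rw [List.length_cons, pow_succ]
    by_cases hj : j = i
    · subst hj
      rw [hb', update_self]
      have := deg_proj c b _ hp.degb j rows cols (fun e => X ⟨j, e⟩)
        (fun e => by rw [totalDegree_X]; exact hpow1) e
      refine this.trans ?_
      have : ρ + 1 ≤ d + 2 := by omega
      calc _ ≤ (d+2) * (Fintype.card ι * (Fintype.card ι * (d+2)) ^ l.length) :=
            Nat.mul_le_mul_right _ this
        _ = _ := by ring
    · rw [hb', update_of_ne hj]
      refine (hp.degb j e).trans ?_
      exact Nat.le_mul_of_pos_right _ (by positivity)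
  · rw [List.length_cons, pow_succ]
    refine (totalDegree_mul _ _).trans ?_
    have h1 := hp.degD
    have h2 := deg_detMi c b _ hp.degb i rows cols
    set E := (Fintype.card ι * (d+2)) ^ l.length
    have : E ≤ Fintype.card ι * E := by nlinarith
    have : ρ * (Fintype.card ι * E) ≤ d * (Fintype.card ι * E) := Nat.mul_le_mul_right _ hρ
    nlinarith
  · intro u u' huu j e
    have h1 := fact2 u
    have h2 := fact2 u'
    have h3 : (fun j e => ev u (b j e)) = (fun j e => ev u' (b j e)) := by
      funext j e; exact hp.depb u u' (fun k hk => huu k (List.mem_cons_of_mem _ hk)) j e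
    rw [h3, huu i (List.mem_cons_self), ← h2] at h1
    exact congrFun (congrFun h1 j) e
  · intro u u' huu
    have h3 : (fun j e => ev u (b j e)) = (fun j e => ev u' (b j e)) := by
      funext j e; exact hp.depb u u' (fun k hk => huu k (List.mem_cons_of_mem _ hk)) j e
    rw [map_mul, map_mul, fact3, fact3, h3,
      hp.depD u u' (fun k hk => huu k (List.mem_cons_of_mem _ hk))]
  · intro φ hφ
    have hc : (0:ℝ) < Fintype.card (N i → K) := by exact_mod_cast Fintype.card_pos
    refine le_trans ?_ (hp.hE (W c i φ) (W_nonneg c i φ hφ))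
    apply le_of_mul_le_mul_left _ hc
    rw [← sum_update (Y := fun i => N i → K) i
      (fun u => if ev u (Δ * Δi) ≠ 0 then φ (fun j e => ev u (b' j e)) else 0), Finset.mul_sum]
    refine Finset.sum_le_sum fun u _ => ?_
    have e1 : ∀ v : N i → K, (if ev (update u i v) (Δ * Δi) ≠ 0 then
        φ (fun j e => ev (update u i v) (b' j e)) else 0) =
        if ev u (Δ * Δi) ≠ 0 then φ (update (fun j e => ev u (b j e)) i
          (proj c (fun j e => ev u (b j e)) i rows cols v)) else 0 := by
      intro v
      rw [fact2, fact1, update_self, map_mul, map_mul, fact1D, fact3, fact3, fact1]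
    simp only [e1]
    by_cases hu : ev u (Δ * Δi) = 0
    · simp only [hu, ne_eq, not_true_eq_false, if_false, Finset.sum_const_zero]
      split_ifs
      · simp
      · exact mul_nonneg hc.le (W_nonneg c i φ hφ _)
    · have hu' := hu
      rw [map_mul, mul_eq_zero, not_or, fact3] at hu'
      simp only [ne_eq, hu, hu'.1, not_false_eq_true, if_true]
      have := avg_ker c (fun j e => ev u (b j e)) i rows cols hu'.2 (hker u)
        (fun v => φ (update (fun j e => ev u (b j e)) i v))
      rw [this]
      exact le_rfl
  · intro R _ _ w hw
    have hw' := hp.hF R w (fun s hs => hw s (List.mem_cons_of_mem _ hs))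
    choose! ε hε1 hε2 using hw'
    let s : ι → R := fun j => if j ∈ l then ε j else 1
    have hsi : s i = 1 := if_neg hi
    have hsu : ∀ j, IsUnit (s j) := by
      intro j; by_cases hj : j ∈ l
      · simp only [s, hj, if_true]; exact hε1 j hj
      · simp only [s, hj, if_false]; exact isUnit_one
    have hy : (fun j e => ev w (b j e)) = fun j e => s j * base a st w j e := by
      funext j e
      by_cases hj : j ∈ l
      · simp only [s, base, st, hj, if_true, List.mem_toFinset]; exact hε2 j hj e
      · simp [s, base, st, hj, hp.hA j hj e, ev]
    obtain ⟨h1, h2⟩ := hw st (List.mem_cons_self)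
    have hdetu : IsUnit (Mi c (fun j e => ev w (b j e)) i rows cols).det := by
      rw [hy, det_Mi_scale c _ s i hsi]
      refine IsUnit.mul (IsUnit.pow _ ?_) h2
      exact (IsUnit.prod_univ_iff (f := s)).2 hsu
    have heq : ∀ j, T c R (update (fun j e => ev w (b j e)) i (w i)) (rows j) = 0 := by
      intro j
      rw [hy, T_update_scale c _ s i hsi]
      have := h1 j
      rw [seqn] at this
      rw [this, mul_zero]
    intro j hj
    by_cases hji : j = i
    · subst hji
      refine ⟨_, hdetu, fun e => ?_⟩
      have := congrFun (congrFun (fact2 w) j) e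
      simp only [update_self] at this
      rw [this, proj_of_eq_zero c _ _ _ _ _ heq]
    · have hjl : j ∈ l := (List.mem_cons.1 hj).resolve_left hji
      refine ⟨ε j, hε1 j hjl, fun e => ?_⟩
      rw [hb', update_of_ne hji]
      exact hε2 j hjl e
  · intro u hu
    rw [map_mul, mul_ne_zero_iff] at hu
    have hne : ∀ j, j ≠ i → (fun e => ev u (b' j e)) = fun e => ev u (b j e) := by
      intro j hj; rw [hb', update_of_ne hj]
    intro s hs
    rcases List.mem_cons.1 hs with rfl | hs
    · have hbase : ∀ j, j ≠ i → base a st (fun i e => ev u (b' i e)) j = fun e => ev u (b j e) := by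
        intro j hj
        by_cases hjl : j ∈ l
        · simp only [base, st, hjl, List.mem_toFinset, if_true]; exact hne j hj
        · simp only [base, st, hjl, List.mem_toFinset, if_false, hp.hA j hjl]
          simp [ev]
      constructor
      · intro j
        have h0 : T c K (fun i e => ev u (b' i e)) (rows j) = 0 := by
          rw [← T_map, hT']; simp
        rw [seqn, ← h0]
        refine T_congr c ?_ _
        funext k
        by_cases hk : k = i
        · subst hk; simp only [st, update_self]
        · change update _ i _ k = _
          rw [update_of_ne hk, hbase k hk, hne k hk]
      · have := hu.2
        rw [fact3] at this
        rw [smat, Mi_congr c _ _ _ hbase]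
        exact this
    · obtain ⟨h1, h2⟩ := hp.hF2 u hu.1 s hs
      obtain ⟨g1, g2, g3⟩ := hp.hG2 s hs
      have hsi : s.i ≠ i := by rintro h; rw [h] at g2; exact hi g2
      have hbase : base a s (fun i e => ev u (b' i e)) = base a s (fun i e => ev u (b i e)) := by
        apply base_congr
        intro j hj
        refine hne j ?_
        rintro rfl; exact hi (g3 _ hj)
      refine ⟨fun j => ?_, ?_⟩
      · rw [seqn, hbase, hne s.i hsi]; exact h1 j
      · rw [smat, hbase]; exact h2
  · simpa using hp.hG
  · intro s hs
    rcases List.mem_cons.1 hs with rfl | hs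
    · exact ⟨hρ, List.mem_cons_self, fun j hj => List.mem_cons_of_mem _ (by simpa [st] using hj)⟩
    · obtain ⟨g1, g2, g3⟩ := hp.hG2 s hs
      exact ⟨g1, List.mem_cons_of_mem _ g2, fun j hj => List.mem_cons_of_mem _ (g3 j hj)⟩

theorem path_exists (c : (∀ i, N i) → M → K) (a : ∀ i, N i → K) (d : ℕ) (ha : T c K a = 0)
    (l : List ι) (hl : l.Nodup) (hS : SB c d l a < 1/2)
    (hq : 2 * (Fintype.card ι * (d+2)) ^ (l.length) ≤ Fintype.card K) :
    ∃ L b Δ, IsPath c a d l L b Δ := by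
  induction l with
  | nil => exact ⟨_, _, _, path_nil c a d ha⟩
  | cons i l ih =>
    have hl' := List.nodup_cons.1 hl
    have hS' : SB c d l a < 1/2 := by
      have := Walk_nonneg c l _ (Bad_nonneg c d i) a
      rw [SB] at hS; linarith
    have hn : 1 ≤ Fintype.card ι := Fintype.card_pos_iff.2 ⟨i⟩
    obtain ⟨L, b, Δ, hp⟩ := ih hl'.2 hS' (le_trans (by
      rw [List.length_cons]
      exact Nat.mul_le_mul_left _ (Nat.pow_le_pow_right (by positivity) (by omega))) hq)
    exact path_cons c a d i l hl'.1 hS hq L b Δ hp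

end Path
end IAV

namespace IAV

/-- multilinear in the coordinates of `J`, independent of the others -/
def MLOn (F : Type) [Field F] {ι : Type} [DecidableEq ι] {G : ι → Type} [∀ i, AddCommGroup (G i)]
    [∀ i, Module F (G i)] {H : Type} [AddCommGroup H] [Module F H] (J : Finset ι)
    (f : (∀ i, G i) → H) : Prop :=
  (∀ i, i ∉ J → ∀ x v, f (Function.update x i v) = f x) ∧
  (∀ i ∈ J, ∀ x v w, f (Function.update x i (v + w)) =
    f (Function.update x i v) + f (Function.update x i w)) ∧
  (∀ i ∈ J, ∀ x (t : F) v, f (Function.update x i (t • v)) = t • f (Function.update x i v))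

section Hom
open Function MvPolynomial
variable {ι : Type} [Fintype ι] [DecidableEq ι] {N : ι → Type} [∀ i, Fintype (N i)]
  [∀ i, DecidableEq (N i)] {M : Type} {K : Type} [Field K]

variable (N) in
/-- weights -/
def wt (s : Σ i, N i) : ι → ℕ := Pi.single s.1 1

/-- indicator degree -/
def ind (S : Finset ι) : ι → ℕ := fun i => if i ∈ S then 1 else 0

theorem weight_wt (d : (Σ i, N i) →₀ ℕ) (i : ι) :
    (Finsupp.weight (wt N) d) i = ∑ e, d ⟨i, e⟩ := by
  rw [Finsupp.weight_apply, Finsupp.sum_fintype _ _ (by simp), Fintype.sum_sigma, Finset.sum_apply]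
  rw [Finset.sum_eq_single i]
  · simp [wt, Finset.sum_apply]
  · intro j _ hj
    simp [wt, Finset.sum_apply, hj.symm]
  · simp

theorem degree_wt (d : (Σ i, N i) →₀ ℕ) :
    d.degree = ∑ i, (Finsupp.weight (wt N) d) i := by
  simp only [weight_wt]
  rw [← Fintype.sum_sigma (f := fun s => d s), Finsupp.degree_eq_sum]

theorem split_monomial (d : (Σ i, N i) →₀ ℕ) (i : ι) (h : (Finsupp.weight (wt N) d) i = 1) :
    ∃ e d', d = Finsupp.single ⟨i, e⟩ 1 + d' ∧ ∀ e', d' ⟨i, e'⟩ = 0 := by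
  rw [weight_wt] at h
  obtain ⟨e, he⟩ : ∃ e, d ⟨i, e⟩ ≠ 0 := by
    by_contra! hcon
    simp [hcon] at h
  have h1 := Finset.add_sum_erase Finset.univ (fun e => d ⟨i, e⟩) (Finset.mem_univ e)
  have h2 : d ⟨i, e⟩ = 1 := by omega
  have h3 : ∑ e' ∈ Finset.univ.erase e, d ⟨i, e'⟩ = 0 := by omega
  rw [Finset.sum_eq_zero_iff] at h3
  refine ⟨e, d - Finsupp.single ⟨i, e⟩ 1, ?_, ?_⟩
  · rw [add_tsub_cancel_of_le]
    rw [Finsupp.single_le_iff]; omega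
  · intro e'
    by_cases hee : e' = e
    · subst hee; simp [h2]
    · have := h3 e' (by simp [hee])
      simp [this]

theorem ev_monomial_indep (d : (Σ i, N i) →₀ ℕ) (r : K) (i : ι) (h : ∀ e, d ⟨i, e⟩ = 0)
    (x : ∀ i, N i → K) (v : N i → K) : ev (update x i v) (monomial d r) = ev x (monomial d r) := by
  simp only [ev, aeval_monomial]
  congr 1
  unfold Finsupp.prod
  refine Finset.prod_congr rfl ?_
  rintro ⟨j, e⟩ hs
  have : j ≠ i := by
    rintro rfl
    rw [Finsupp.mem_support_iff] at hs
    exact hs (h e)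
  simp [update_of_ne this]

theorem MLOn_ev (p : MvPolynomial (Σ i, N i) K) (S : Finset ι)
    (hp : IsWeightedHomogeneous (wt N) p (ind S)) :
    MLOn K (G := fun i => N i → K) S (fun x => ev x p) := by
  have hsum : ∀ x : (∀ i, N i → K), ev x p = ∑ d ∈ p.support, ev x (monomial d (p.coeff d)) := by
    intro x
    conv_lhs => rw [p.as_sum]
    rw [map_sum]
  have hw : ∀ d ∈ p.support, ∀ i, (Finsupp.weight (wt N) d) i = if i ∈ S then 1 else 0 := by
    intro d hd i
    rw [hp (mem_support_iff.1 hd)]; rfl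
  have hlin : ∀ d ∈ p.support, ∀ i ∈ S, ∃ e, ∃ d' : (Σ i, N i) →₀ ℕ,
      ∀ (x : ∀ i, N i → K) (v : N i → K), ev (update x i v) (monomial d (p.coeff d)) =
        v e * ev x (monomial d' (p.coeff d)) := by
    intro d hd i hi
    have h1 := hw d hd i
    rw [if_pos hi] at h1
    obtain ⟨e, d', h2, h3⟩ := split_monomial d i h1
    refine ⟨e, d', fun x v => ?_⟩
    have h4 : monomial d (p.coeff d) = X ⟨i, e⟩ * monomial d' (p.coeff d) := by
      rw [X, monomial_mul, one_mul, ← h2]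
    rw [h4, map_mul, ev_monomial_indep d' _ i h3]
    simp [ev]
  refine ⟨?_, ?_, ?_⟩
  · intro i hi x v
    simp only [hsum]
    refine Finset.sum_congr rfl fun d hd => ev_monomial_indep d _ i (fun e => ?_) x v
    have h1 := hw d hd i
    rw [if_neg hi, weight_wt, Finset.sum_eq_zero_iff] at h1
    exact h1 e (Finset.mem_univ _)
  · intro i hi x v w
    simp only [hsum, ← Finset.sum_add_distrib]
    refine Finset.sum_congr rfl fun d hd => ?_
    obtain ⟨e, d', h⟩ := hlin d hd i hi
    simp [h, add_mul]
  · intro i hi x t v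
    simp only [hsum, Finset.smul_sum]
    refine Finset.sum_congr rfl fun d hd => ?_
    obtain ⟨e, d', h⟩ := hlin d hd i hi
    simp [h, mul_assoc]

theorem MLOn_pi {H : Type} (J : Finset ι) {G : ι → Type} [∀ i, AddCommGroup (G i)]
    [∀ i, Module K (G i)] (f : (∀ i, G i) → H → K)
    (hf : ∀ h, MLOn K J (fun x => f x h)) : MLOn K J f := by
  refine ⟨?_, ?_, ?_⟩
  · intro i hi x v; ext h; exact (hf h).1 i hi x v
  · intro i hi x v w; ext h; exact (hf h).2.1 i hi x v w
  · intro i hi x t v; ext h; exact (hf h).2.2 i hi x t v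

theorem comp_mul {σ : Type} {D : Type} [AddCancelCommMonoid D] (w : σ → D) (α p : MvPolynomial σ K)
    (m m' : D) (hα : IsWeightedHomogeneous w α m) :
    weightedHomogeneousComponent w (m + m') (α * p) =
      α * weightedHomogeneousComponent w m' p := by
  classical
  induction p using MvPolynomial.induction_on' with
  | monomial d r =>
    have h1 := isWeightedHomogeneous_monomial w d r rfl
    have h2 := hα.mul h1
    by_cases h : Finsupp.weight w d = m'
    · rw [h] at h1 h2
      rw [h2.weightedHomogeneousComponent_same, h1.weightedHomogeneousComponent_same]
    · rw [h2.weightedHomogeneousComponent_ne, h1.weightedHomogeneousComponent_ne, mul_zero]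
      · exact fun h' => h h'.symm
      · exact fun h' => h (add_left_cancel h').symm
  | add p q hp hq => rw [mul_add, map_add, map_add, hp, hq, mul_add]

theorem T_hom (c : (∀ i, N i) → M → K) (x : ∀ i, N i → MvPolynomial (Σ i, N i) K)
    (S : Finset ι)
    (hx : ∀ i e, IsWeightedHomogeneous (wt N) (x i e) (if i ∈ S then Pi.single i 1 else 0)) (h : M) :
    IsWeightedHomogeneous (wt N) (T c (MvPolynomial (Σ i, N i) K) x h) (ind S) := by
  rw [T_apply]
  refine IsWeightedHomogeneous.sum _ _ _ fun e _ => ?_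
  have h1 := IsWeightedHomogeneous.prod Finset.univ (fun i => x i (e i)) _ (fun i _ => hx i (e i))
  have h2 := h1.mul (isWeightedHomogeneous_C (wt N) (c e h))
  rw [add_zero] at h2
  have h3 : (∑ i, if i ∈ S then (Pi.single i 1 : ι → ℕ) else 0) = ind S := by
    ext j
    rw [Finset.sum_apply, Finset.sum_eq_single j]
    · simp only [ind]; split_ifs <;> simp
    · intro b _ hb; split_ifs
      · simp [hb.symm]
      · rfl
    · simp
  rw [h3] at h2
  exact h2

end Hom

section Extract
open Function MvPolynomial
variable {ι : Type} [Fintype ι] [DecidableEq ι] {N : ι → Type} [∀ i, Fintype (N i)]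
  [∀ i, DecidableEq (N i)] {M : Type} {K : Type} [Field K]
  (c : (∀ i, N i) → M → K) (a : ∀ i, N i → K)
   {R : Type} [CommRing R] [Algebra K R]
   {R' : Type} [CommRing R'] [Algebra K R']

theorem base_map (f : R →ₐ[K] R') (st : Step N M) (w : ∀ i, N i → R) :
    (fun j e => f (base a st w j e)) = base a st (fun j e => f (w j e)) := by
  funext j e
  unfold base
  split_ifs <;> simp

theorem seqn_map (f : R →ₐ[K] R') (st : Step N M) (w : ∀ i, N i → R) (j : Fin st.ρ) :
    f (seqn c a st w j) = seqn c a st (fun j e => f (w j e)) j := by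
  rw [seqn, T_map, update_map, base_map]; rfl

theorem smat_map (f : R →ₐ[K] R') (st : Step N M) (w : ∀ i, N i → R) :
    f (smat c a st w).det = (smat c a st (fun j e => f (w j e))).det := by
  rw [smat, det_Mi_map, base_map]; rfl

/-- the fixed part -/
noncomputable def yfix (st : Step N M) (b0 : ∀ i, N i → K) : ∀ i, N i → MvPolynomial (Σ i, N i) K :=
  fun j e => C (if j ∈ insert st.i st.pre then b0 j e else a j e)

/-- the variable part -/
noncomputable def xvar (K : Type) [Field K] (st : Step N M) : ∀ i, N i → MvPolynomial (Σ i, N i) K :=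
  fun j e => if j ∈ insert st.i st.pre then X ⟨j, e⟩ else 0

/-- the generators -/
noncomputable def alph (st : Step N M) (b0 : ∀ i, N i → K) (j : Fin st.ρ) (S : Finset ι) :
    MvPolynomial (Σ i, N i) K :=
  T c (MvPolynomial (Σ i, N i) K) (S.piecewise (xvar K st) (yfix a st b0)) (st.rows j)

theorem alph_hom (st : Step N M) (b0 : ∀ i, N i → K) (j : Fin st.ρ) (S : Finset ι) :
    IsWeightedHomogeneous (wt N) (alph c a st b0 j S) (ind S) := by
  refine T_hom c _ S (fun i e => ?_) _
  by_cases hi : i ∈ S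
  · simp only [Finset.piecewise_eq_of_mem _ _ _ hi, if_pos hi, xvar]
    split_ifs
    · exact isWeightedHomogeneous_X K (wt N) ⟨i, e⟩
    · exact isWeightedHomogeneous_zero K _ _
  · simp only [Finset.piecewise_eq_of_notMem _ _ _ hi, if_neg hi, yfix]
    exact isWeightedHomogeneous_C _ _

/-- shifted variables -/
noncomputable def shiftX (b0 : ∀ i, N i → K) : ∀ i, N i → MvPolynomial (Σ i, N i) K :=
  fun j e => X ⟨j, e⟩ + C (b0 j e)

theorem seqn_expand (st : Step N M) (b0 : ∀ i, N i → K) (j : Fin st.ρ) :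
    seqn c a st (shiftX b0) j = ∑ S : Finset ι, alph c a st b0 j S := by
  have h1 : update (base a st (shiftX b0)) st.i (shiftX b0 st.i) =
      xvar K st + yfix a st b0 := by
    funext k e
    simp only [Pi.add_apply, xvar, yfix]
    by_cases hk : k = st.i
    · subst hk; simp [shiftX]
    · rw [update_of_ne hk]
      by_cases hk2 : k ∈ st.pre
      · simp [base, hk2, shiftX]
      · simp [base, hk2, hk]
  rw [seqn, h1, (T c _).map_add_univ, Finset.sum_apply]
  rfl

theorem alph_empty (st : Step N M) (b0 : ∀ i, N i → K) (j : Fin st.ρ)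
    (h0 : seqn c a st b0 j = 0) : alph c a st b0 j ∅ = 0 := by
  have h1 : (Algebra.ofId K (MvPolynomial (Σ i, N i) K)) (seqn c a st b0 j) = 0 := by
    rw [h0, map_zero]
  rw [seqn, T_map, update_map, base_map] at h1
  rw [← h1, alph]
  refine T_congr c ?_ _
  funext k e
  simp only [Finset.piecewise_empty, yfix]
  by_cases hk : k = st.i
  · subst hk; simp
    try rfl
  · rw [update_of_ne hk]
    by_cases hk2 : k ∈ st.pre
    · simp [base, hk2]
      try rfl
    · simp [base, hk2, hk]

theorem unit_quot {σ : Type} (I : Ideal (MvPolynomial σ K)) (n : ℕ)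
    (hI : idealOfVars σ K ^ (n+1) ≤ I) (p : MvPolynomial σ K) (hp : constantCoeff p ≠ 0) :
    IsUnit (Ideal.Quotient.mk I p) := by
  have h1 : p - C (constantCoeff p) ∈ idealOfVars σ K := by
    have := (mem_pow_idealOfVars_iff' (R := K) 1 (p - C (constantCoeff p))).2 (by
      intro x hx
      have : x = 0 := by rw [Nat.lt_one_iff] at hx; exact (Finsupp.degree_eq_zero_iff x).1 hx
      subst this
      simp [constantCoeff_eq])
    simpa using this
  have h2 : IsNilpotent (Ideal.Quotient.mk I (p - C (constantCoeff p))) := by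
    refine ⟨n+1, ?_⟩
    rw [← map_pow, Ideal.Quotient.eq_zero_iff_mem]
    exact hI (Ideal.pow_mem_pow h1 _)
  have h3 : IsUnit (Ideal.Quotient.mk I (C (constantCoeff p))) := by
    apply IsUnit.map
    exact (isUnit_iff_ne_zero.2 hp).map C
  have := h2.isUnit_add_left_of_commute h3 (Commute.all _ _)
  rw [← map_add] at this
  simpa using this

theorem comp_shift (b0 : ∀ i, N i → K) (h : M) :
    weightedHomogeneousComponent (wt N) (ind Finset.univ)
      (T c (MvPolynomial (Σ i, N i) K) (shiftX b0) h) =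
      T c (MvPolynomial (Σ i, N i) K) (fun i e => X ⟨i, e⟩) h := by
  have h1 : (shiftX b0 : ∀ i, N i → MvPolynomial (Σ i, N i) K) =
    (fun i e => X ⟨i, e⟩) + (fun i e => C (b0 i e)) := by
    funext i e; simp [shiftX]
  rw [h1, (T c _).map_add_univ, Finset.sum_apply, map_sum]
  have hh : ∀ S : Finset ι, IsWeightedHomogeneous (wt N)
      (T c (MvPolynomial (Σ i, N i) K)
        (S.piecewise (fun i e => X ⟨i, e⟩) (fun i e => C (b0 i e))) h) (ind S) := by
    intro S
    refine T_hom c _ S (fun i e => ?_) _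
    by_cases hi : i ∈ S
    · simp only [Finset.piecewise_eq_of_mem _ _ _ hi, if_pos hi]
      exact isWeightedHomogeneous_X K (wt N) ⟨i, e⟩
    · simp only [Finset.piecewise_eq_of_notMem _ _ _ hi, if_neg hi]
      exact isWeightedHomogeneous_C _ _
  rw [Finset.sum_eq_single Finset.univ]
  · rw [(hh _).weightedHomogeneousComponent_same, Finset.piecewise_univ]
  · intro S _ hS
    apply (hh S).weightedHomogeneousComponent_ne
    intro heq
    apply hS
    ext i
    have := congrFun heq i
    simp only [ind, Finset.mem_univ, if_true] at this
    by_contra hi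
    simp at hi
    simp [hi] at this
  · simp

theorem comp_pow (p : MvPolynomial (Σ i, N i) K)
    (hp : p ∈ idealOfVars (Σ i, N i) K ^ (Fintype.card ι + 1)) :
    weightedHomogeneousComponent (wt N) (ind Finset.univ) p = 0 := by
  rw [mem_pow_idealOfVars_iff'] at hp
  ext d
  rw [coeff_weightedHomogeneousComponent]
  split_ifs with h
  · rw [hp d, coeff_zero]
    rw [degree_wt, h]; simp [ind]
  · simp
end Extract
end IAV

namespace IAV
section Extract
open Function MvPolynomial
variable {ι : Type} [Fintype ι] [DecidableEq ι] {N : ι → Type} [∀ i, Fintype (N i)]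
  [∀ i, DecidableEq (N i)] {M : Type} {K : Type} [Field K] [Fintype K] [DecidableEq K]

theorem coordPL (c : (∀ i, N i) → M → K) (d : ℕ)
    (hq1 : 2 * Fintype.card ι < Fintype.card K)
    (hq2 : 2 * (Fintype.card ι * (d+2)) ^ (Fintype.card ι) ≤ Fintype.card K)
    (hZ : Fintype.card (∀ i, N i → K) ≤ (ZF c).card * Fintype.card K ^ d) :
    ∃ (Γ : Type) (_ : Fintype Γ) (J : Γ → Finset ι) (α : Γ → (∀ i, N i → K) → K)
      (A : Γ → (∀ i, N i → K) → M → K),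
      Fintype.card Γ ≤ Fintype.card ι * (d * 2 ^ Fintype.card ι) ∧
      (∀ g, (J g).Nonempty) ∧ (∀ g, MLOn K (J g) (α g)) ∧ (∀ g, MLOn K (J g)ᶜ (A g)) ∧
      ∀ x h, T c K x h = ∑ g, α g x * A g x h := by
  classical
  set l : List ι := Finset.univ.toList with hl
  have hlen : l.length = Fintype.card ι := by simp [hl]
  obtain ⟨a, haZ, hS⟩ := exists_good c d l (by rw [hlen]; exact hq1) hZ
  have ha : T c K a = 0 := by simpa [ZF] using haZ
  obtain ⟨L, b, Δ, hp⟩ := path_exists c a d ha l (Finset.nodup_toList _) hS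
    (by rw [hlen]; exact hq2)
  have hmem : ∀ i, i ∈ l := fun i => by simp [hl]
  obtain ⟨u0, hu0⟩ : ∃ u0 : (∀ i, N i → K), ev u0 Δ ≠ 0 := by
    by_contra! hcon
    have h1 := sz' Δ hp.hD (by
      have := hp.degD
      rw [hlen] at this
      omega)
    have hX : (0:ℝ) < Fintype.card (∀ i, N i → K) := by exact_mod_cast Fintype.card_pos
    simp [hcon] at h1
    have h2 : (Fintype.card (∀ i, N i → K) : ℝ) = ∏ i : ι, (Fintype.card K : ℝ) ^ Fintype.card (N i) := by
      simp
    linarith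
  set b0 : ∀ i, N i → K := fun i e => ev u0 (b i e) with hb0
  have hF2 := hp.hF2 u0 hu0
  let Γ := Σ k : Fin L.length, (Fin (L.get k).ρ × {S : Finset ι // S.Nonempty})
  let αp : Γ → MvPolynomial (Σ i, N i) K := fun g => alph c a (L.get g.1) b0 g.2.1 g.2.2
  let I0 := Ideal.span (Set.range αp)
  let I := I0 ⊔ idealOfVars (Σ i, N i) K ^ (Fintype.card ι + 1)
  let mk := Ideal.Quotient.mkₐ K I
  let w : ∀ i, N i → (MvPolynomial (Σ i, N i) K ⧸ I) := fun i e => mk (shiftX b0 i e)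
  have hαI : ∀ g, αp g ∈ I := fun g => (le_sup_left : I0 ≤ I) (Ideal.subset_span ⟨g, rfl⟩)
  have hw : ∀ st ∈ L, (∀ j, seqn c a st w j = 0) ∧ IsUnit (smat c a st w).det := by
    intro st hst
    obtain ⟨k, rfl⟩ := List.mem_iff_get.1 hst
    obtain ⟨h1, h2⟩ := hF2 _ hst
    constructor
    · intro j
      change seqn c a (L.get k) (fun i e => mk (shiftX b0 i e)) j = 0
      rw [← seqn_map, seqn_expand, map_sum]
      refine Finset.sum_eq_zero fun S _ => ?_
      rcases S.eq_empty_or_nonempty with rfl | hSn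
      · rw [alph_empty c a _ b0 j (h1 j), map_zero]
      · exact Ideal.Quotient.eq_zero_iff_mem.2 (hαI ⟨k, j, S, hSn⟩)
    · change IsUnit (smat c a (L.get k) (fun i e => mk (shiftX b0 i e))).det
      rw [← smat_map]
      refine unit_quot I (Fintype.card ι) le_sup_right _ ?_
      have h3 := smat_map c a (aeval (fun _ => (0:K)) : MvPolynomial (Σ i, N i) K →ₐ[K] K)
        (L.get k) (shiftX b0)
      rw [aeval_zero'] at h3
      have h4 : (fun (j : ι) (e : N j) => (aeval (fun _ => (0:K)) : MvPolynomial (Σ i, N i) K →ₐ[K] K)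
        (shiftX b0 j e)) = b0 := by
        funext j e; simp [shiftX]
      rw [h4] at h3
      intro h5
      rw [h5] at h3
      exact h2 (by rw [← h3]; simp)
  have hF := hp.hF _ w hw
  have hTw : ∀ h, T c _ w h = 0 := by
    intro h
    choose ε hε1 hε2 using fun i => hF i (hmem i)
    have h1 : ev w (T c _ b h) = 0 := by rw [hp.hT]; simp
    rw [T_map] at h1
    have h2 : (fun i e => ev w (b i e)) = fun i e => ε i * w i e := by
      funext i e; exact hε2 i e
    rw [h2, T_smul] at h1
    exact (IsUnit.mul_right_eq_zero ((IsUnit.prod_univ_iff (f := ε)).2 hε1)).1 h1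
  have hmemI : ∀ h, T c _ (shiftX b0) h ∈ I := by
    intro h
    have h1 := hTw h
    change T c _ (fun i e => mk (shiftX b0 i e)) h = 0 at h1
    rw [← T_map] at h1
    exact Ideal.Quotient.eq_zero_iff_mem.1 h1
  have hdec : ∀ h, ∃ p : Γ → MvPolynomial (Σ i, N i) K,
      T c (MvPolynomial (Σ i, N i) K) (fun i e => X ⟨i, e⟩) h =
      ∑ g, αp g * weightedHomogeneousComponent (wt N) (ind (g.2.2.1)ᶜ) (p g) := by
    intro h
    obtain ⟨y, hy, z, hz, hyz⟩ := Submodule.mem_sup.1 (hmemI h)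
    obtain ⟨p, hp⟩ := Ideal.mem_span_range_iff_exists_fun.1 hy
    refine ⟨p, ?_⟩
    rw [← comp_shift c b0 h, ← hyz, map_add, comp_pow z hz, add_zero, ← hp, map_sum]
    refine Finset.sum_congr rfl fun g _ => ?_
    rw [mul_comm, ← comp_mul (wt N) (αp g) (p g) (ind g.2.2.1) _ (alph_hom c a _ b0 _ _)]
    congr 2
    ext i
    simp only [ind, Pi.add_apply, Finset.mem_univ, if_true, Finset.mem_compl]
    by_cases hi : i ∈ g.2.2.1 <;> simp [hi]
  choose p hpdec using hdec
  refine ⟨Γ, inferInstance, fun g => g.2.2.1, fun g x => ev x (αp g),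
    fun g x h => ev x (weightedHomogeneousComponent (wt N) (ind (g.2.2.1)ᶜ) (p h g)),
    ?_, fun g => g.2.2.2, ?_, ?_, ?_⟩
  · rw [Fintype.card_sigma]
    have hb : ∀ k : Fin L.length, Fintype.card (Fin (L.get k).ρ × {S : Finset ι // S.Nonempty}) ≤
        d * 2 ^ Fintype.card ι := by
      intro k
      rw [Fintype.card_prod, Fintype.card_fin]
      refine Nat.mul_le_mul (hp.hG2 _ (List.get_mem _ _)).1 ?_
      refine (Fintype.card_subtype_le _).trans ?_
      simp
    refine (Finset.sum_le_card_nsmul _ _ _ fun k _ => hb k).trans ?_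
    rw [Finset.card_univ, Fintype.card_fin, smul_eq_mul]
    refine Nat.mul_le_mul_right _ ?_
    rw [← hlen]; exact hp.hG
  · intro g; exact MLOn_ev _ _ (alph_hom c a _ b0 _ _)
  · intro g
    refine MLOn_pi _ _ fun h => ?_
    exact MLOn_ev _ _ (weightedHomogeneousComponent_isWeightedHomogeneous _ _)
  · intro x h
    have h1 := congrArg (ev x) (hpdec h)
    rw [T_map, map_sum] at h1
    simp only [map_mul] at h1
    rw [← h1]
    refine T_congr c ?_ h
    funext i e; simp [ev]
end Extract
end IAV

namespace IAV
section Copy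
open Function
variable {ι : Type} [Fintype ι] [DecidableEq ι] {Y : ι → Type} [∀ i, Fintype (Y i)]

theorem sum_zero_coord {V : Type} [Fintype V] (m : ℕ) (F : V → ℝ) :
    ∑ u : Fin (m+1) → V, F (u 0) = (Fintype.card V : ℝ) ^ m * ∑ v, F v := by
  rcases isEmpty_or_nonempty V with hV | hV
  · simp
  have hc : (0:ℝ) < Fintype.card V := by exact_mod_cast Fintype.card_pos
  apply mul_left_cancel₀ hc.ne'
  have := sum_update (Y := fun _ : Fin (m+1) => V) 0 (fun u => F (u 0))
  rw [← this]
  simp [pow_succ]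
  ring

open scoped Classical in
/-- all copies indexed by tuples supported on `S` are in `Z` -/
noncomputable def gS (Z : (∀ i, Y i) → Prop) (m : ℕ) (S : Finset ι)
    (y : ∀ i, Fin (m+1) → Y i) : ℝ :=
  if ∀ s : ι → Fin (m+1), (∀ i, i ∉ S → s i = 0) → Z (fun i => y i (s i)) then 1 else 0

theorem gS_eq (Z : (∀ i, Y i) → Prop) (m : ℕ) (S : Finset ι)
    (y : ∀ i, Fin (m+1) → Y i) (p : Prop) [Decidable p]
    (h : (∀ s : ι → Fin (m+1), (∀ i, i ∉ S → s i = 0) → Z (fun i => y i (s i))) ↔ p) :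
    gS Z m S y = if p then 1 else 0 := by
  unfold gS
  by_cases hp : p
  · rw [if_pos hp, if_pos (h.2 hp)]
  · rw [if_neg hp, if_neg (fun h' => hp (h.1 h'))]

theorem gS_nonneg (Z : (∀ i, Y i) → Prop) (m : ℕ) (S : Finset ι)
    (y : ∀ i, Fin (m+1) → Y i) : 0 ≤ gS Z m S y := by
  unfold gS; split_ifs <;> norm_num

theorem gS_insert (Z : (∀ i, Y i) → Prop) (m : ℕ) (S : Finset ι) (i : ι) (hi : i ∉ S)
    (y : ∀ i, Fin (m+1) → Y i) :
    gS Z m (insert i S) y = ∏ t, gS Z m S (update y i (fun _ => y i t)) := by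
  classical
  unfold gS
  rw [Finset.prod_ite_zero]
  simp only [Finset.prod_const_one]
  refine if_congr ?_ rfl rfl
  constructor
  · intro h t _ s hs
    have := h (update s i t) (by
      intro j hj
      rw [Finset.mem_insert, not_or] at hj
      rw [update_of_ne hj.1]; exact hs j hj.2)
    convert this using 1
    funext j
    by_cases hj : j = i
    · subst hj; simp
    · simp [update_of_ne hj]
  · intro h s hs
    have := h (s i) (Finset.mem_univ _) (update s i 0) (by
      intro j hj
      by_cases hji : j = i
      · subst hji; simp
      · rw [update_of_ne hji]; exact hs j (by simp [hji, hj]))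
    convert this using 1
    funext j
    by_cases hj : j = i
    · subst hj; simp
    · simp [update_of_ne hj]

theorem gS_zero (Z : (∀ i, Y i) → Prop) (m : ℕ) (S : Finset ι) (i : ι) (hi : i ∉ S)
    (y : ∀ i, Fin (m+1) → Y i) (u : Fin (m+1) → Y i) :
    gS Z m S (update y i u) = gS Z m S (update y i (fun _ => u 0)) := by
  classical
  unfold gS
  refine if_congr ?_ rfl rfl
  refine forall_congr' fun s => forall_congr' fun hs => ?_
  have : (fun j => update y i u j (s j)) = fun j => update y i (fun _ => u 0) j (s j) := by
    funext j
    by_cases hj : j = i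
    · subst hj; simp [hs j hi]
    · simp [update_of_ne hj]
  rw [this]

theorem gS_step [∀ i, Nonempty (Y i)] (Z : (∀ i, Y i) → Prop) (m : ℕ) (S : Finset ι) (i : ι)
    (hi : i ∉ S) :
    (∑ y, gS Z m S y) ^ (m+1) ≤
      (Fintype.card (∀ i, Fin (m+1) → Y i) : ℝ) ^ m * ∑ y, gS Z m (insert i S) y := by
  have hc : (0:ℝ) < Fintype.card (Y i) := by exact_mod_cast Fintype.card_pos
  have hA : (0:ℝ) < Fintype.card (∀ i, Fin (m+1) → Y i) := by exact_mod_cast Fintype.card_pos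
  let Gf : (∀ i, Fin (m+1) → Y i) → Y i → ℝ := fun y v => gS Z m S (update y i (fun _ => v))
  have hcard : (Fintype.card (Fin (m+1) → Y i) : ℝ) = (Fintype.card (Y i) : ℝ) ^ (m+1) := by simp
  have h1 := sum_update (Y := fun i => Fin (m+1) → Y i) i (gS Z m (insert i S))
  have h2 := sum_update (Y := fun i => Fin (m+1) → Y i) i (gS Z m S)
  have e1 : ∀ y : (∀ i, Fin (m+1) → Y i), ∑ u : Fin (m+1) → Y i,
      gS Z m (insert i S) (update y i u) = (∑ v, Gf y v) ^ (m+1) := by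
    intro y
    have : (∑ v, Gf y v) ^ (m+1) = ∏ t : Fin (m+1), ∑ v, Gf y v := by simp
    rw [this, Finset.prod_univ_sum, Fintype.piFinset_univ]
    refine Finset.sum_congr rfl fun u _ => ?_
    rw [gS_insert Z m S i hi]
    simp [Gf]
  have e2 : ∀ y : (∀ i, Fin (m+1) → Y i), ∑ u : Fin (m+1) → Y i,
      gS Z m S (update y i u) = (Fintype.card (Y i) : ℝ) ^ m * (∑ v, Gf y v) := by
    intro y
    rw [← sum_zero_coord]
    exact Finset.sum_congr rfl fun u _ => gS_zero Z m S i hi y u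
  simp only [e1] at h1
  simp only [e2] at h2
  rw [hcard] at h1 h2
  rw [← Finset.mul_sum, pow_succ, mul_assoc] at h2
  have h3 := mul_left_cancel₀ (pow_pos hc m).ne' h2
  have h4 := pow_sum_div_card_le_sum_pow (s := (Finset.univ : Finset (∀ i, Fin (m+1) → Y i)))
    (f := fun y => ∑ v, Gf y v) (fun y _ => Finset.sum_nonneg fun v _ => gS_nonneg _ _ _ _) m
  rw [h3, h1, mul_pow, mul_div_assoc, Finset.card_univ] at h4
  have h5 := le_of_mul_le_mul_left h4 (pow_pos hc _)
  rw [div_le_iff₀ (pow_pos hA _)] at h5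
  linarith

theorem gS_empty (Z : (∀ i, Y i) → Prop) (m : ℕ) [DecidablePred Z] :
    ∑ y, gS Z m (∅ : Finset ι) y = (Fintype.card (∀ i, Y i) : ℝ) ^ m *
      (Finset.univ.filter Z).card := by
  have h := sum_zero_coord (V := ∀ i, Y i) m (fun x => if Z x then 1 else 0)
  have h0 : ∑ v : (∀ i, Y i), (if Z v then (1:ℝ) else 0) = (Finset.univ.filter Z).card := by
    rw [Finset.sum_boole]
  rw [← h0, ← h]
  rw [← Equiv.sum_comp (Equiv.piComm (fun (i : ι) (_ : Fin (m+1)) => Y i))]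
  refine Finset.sum_congr rfl fun y _ => ?_
  refine gS_eq Z m _ _ _ ?_
  constructor
  · intro h
    exact h (fun _ => 0) (fun _ _ => rfl)
  · intro h s hs
    have : s = fun _ => 0 := by funext i; exact hs i (by simp)
    subst this
    exact h

theorem copy_bound [∀ i, Nonempty (Y i)] (Z : (∀ i, Y i) → Prop) [DecidablePred Z] (m : ℕ) (Q : ℝ)
    (hQ : 0 ≤ Q)
    (hZ : (Fintype.card (∀ i, Y i) : ℝ) ≤ (Finset.univ.filter Z).card * Q)
    [DecidablePred fun y : (∀ i, Fin (m+1) → Y i) => ∀ s : ι → Fin (m+1), Z (fun i => y i (s i))] :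
    (Fintype.card (∀ i, Fin (m+1) → Y i) : ℝ) ≤
      (Finset.univ.filter fun y : (∀ i, Fin (m+1) → Y i) =>
        ∀ s : ι → Fin (m+1), Z (fun i => y i (s i))).card * Q ^ ((m+1) ^ Fintype.card ι) := by
  have hA : (0:ℝ) < Fintype.card (∀ i, Fin (m+1) → Y i) := by exact_mod_cast Fintype.card_pos
  have key : ∀ S : Finset ι, (Fintype.card (∀ i, Fin (m+1) → Y i) : ℝ) ≤
      (∑ y, gS Z m S y) * Q ^ ((m+1) ^ S.card) := by
    intro S
    induction S using Finset.induction_on with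
    | empty =>
      rw [gS_empty]
      have : (Fintype.card (∀ i, Fin (m+1) → Y i) : ℝ) = (Fintype.card (∀ i, Y i) : ℝ) ^ (m+1) := by
        rw [Fintype.card_congr (Equiv.piComm (fun (i : ι) (_ : Fin (m+1)) => Y i))]
        simp
      rw [this, pow_succ]
      simp only [Finset.card_empty, pow_zero, pow_one, mul_assoc]
      gcongr
    | insert i S hi ih =>
      rw [Finset.card_insert_of_notMem hi, pow_succ, pow_mul]
      have h1 := pow_le_pow_left₀ hA.le ih (m+1)
      have h2 := gS_step Z m S i hi
      rw [mul_pow] at h1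
      have h3 := h1.trans (mul_le_mul_of_nonneg_right h2 (by positivity))
      rw [pow_succ, mul_assoc] at h3
      exact le_of_mul_le_mul_left h3 (pow_pos hA _)
  have := key Finset.univ
  rw [Finset.card_univ] at this
  convert this using 2
  rw [Finset.card_filter, Nat.cast_sum]
  refine Finset.sum_congr rfl fun y _ => ?_
  rw [gS_eq Z m Finset.univ y (∀ s : ι → Fin (m+1), Z (fun i => y i (s i))) (by simp)]
  split_ifs <;> simp
end Copy
end IAV

namespace IAV
section Desc
open Function
variable {ι : Type} [Fintype ι] [DecidableEq ι] {N : ι → Type} [∀ i, Fintype (N i)]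
  [∀ i, DecidableEq (N i)] {M : Type} {F : Type} [Field F] {K : Type} [Field K] [Algebra F K]

/-- base change of a point -/
def bc (K : Type) [Field K] [Algebra F K] (x : ∀ i, N i → F) : ∀ i, N i → K :=
  fun i e => algebraMap F K (x i e)

theorem bc_update (x : ∀ i, N i → F) (i : ι) (v : N i → F) :
    bc K (update x i v) = update (bc K x) i (fun e => algebraMap F K (v e)) := by
  funext j
  by_cases hj : j = i
  · subst hj; funext e; simp [bc]
  · funext e; simp [bc, update_of_ne hj]

theorem MLOn_desc {H H' : Type} [AddCommGroup H] [Module K H] [Module F H] [IsScalarTower F K H]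
    [AddCommGroup H'] [Module F H'] (J : Finset ι) (f : (∀ i, N i → K) → H) (hf : MLOn K J f)
    (L : H →ₗ[F] H') : MLOn F J (fun x : ∀ i, N i → F => L (f (bc K x))) := by
  refine ⟨fun i hi x v => ?_, fun i hi x v w => ?_, fun i hi x t v => ?_⟩
  · simp only [bc_update]
    rw [hf.1 i hi]
  · simp only [bc_update]
    rw [← map_add, ← hf.2.1 i hi]
    congr 3
    funext e; simp
  · simp only [bc_update]
    rw [← map_smul, ← algebraMap_smul K t (f _), ← hf.2.2 i hi]
    congr 3
    funext e; simp

/-- coefficients over the extension -/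
def cK (K : Type) [Field K] [Algebra F K] (c : (∀ i, N i) → M → F) : (∀ i, N i) → M → K :=
  fun e h => algebraMap F K (c e h)

theorem T_bc (c : (∀ i, N i) → M → F) (x : ∀ i, N i → F) (h : M) :
    T (cK K c) K (bc K x) h = algebraMap F K (T c F x h) := by
  simp [T_apply, cK, bc, map_sum, map_mul, map_prod]

theorem density_ext [Fintype F] [DecidableEq F] [Fintype K] [DecidableEq K]
    (c : (∀ i, N i) → M → F) (m : ℕ) (κ : Module.Basis (Fin (m+1)) F K) (ρ : ℕ)
    (hZ : Fintype.card (∀ i, N i → F) ≤ (ZF c).card * Fintype.card F ^ ρ) :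
    Fintype.card (∀ i, N i → K) ≤ (ZF (cK K c)).card *
      Fintype.card K ^ (ρ * (m+1) ^ Fintype.card ι) := by
  classical
  have hcK : Fintype.card K = Fintype.card F ^ (m+1) := by
    rw [Fintype.card_congr κ.equivFun.toEquiv]; simp
  have h1 := copy_bound (Y := fun i => N i → F) (fun x => T c F x = 0) m
    ((Fintype.card F : ℝ) ^ ρ) (by positivity) (by
      have : ((Fintype.card (∀ i, N i → F) : ℕ) : ℝ) ≤ ((ZF c).card * Fintype.card F ^ ρ : ℕ) := by
        exact_mod_cast hZ
      refine this.trans (le_of_eq ?_)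
      push_cast
      congr 2)
  let φ : (∀ i, Fin (m+1) → N i → F) → (∀ i, N i → K) :=
    fun y i e => ∑ t, y i t e • κ t
  have hφ : Injective φ := by
    intro y y' h
    funext i t e
    have := congrFun (congrFun h i) e
    have h2 := congrArg (fun z => κ.repr z t) this
    simp only [φ] at h2
    rw [κ.repr_sum_self, κ.repr_sum_self] at h2
    exact h2
  have hle : (Finset.univ.filter fun y : (∀ i, Fin (m+1) → N i → F) =>
        ∀ s : ι → Fin (m+1), T c F (fun i => y i (s i)) = 0).card ≤ (ZF (cK K c)).card := by
    refine Finset.card_le_card_of_injOn φ ?_ hφ.injOn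
    intro y hy
    simp only [Finset.coe_filter, Finset.mem_univ, true_and, Set.mem_ofPred_eq] at hy
    simp only [ZF, Finset.coe_filter, Finset.mem_univ, true_and, Set.mem_ofPred_eq]
    have e1 : φ y = fun i => ∑ t, κ t • (fun e => algebraMap F K (y i t e) : N i → K) := by
      funext i e
      simp [φ, Finset.sum_apply, Algebra.smul_def, mul_comm]
    rw [e1, MultilinearMap.map_sum]
    refine Finset.sum_eq_zero fun s _ => ?_
    rw [MultilinearMap.map_smul_univ]
    have : T (cK K c) K (fun i => (fun e => algebraMap F K (y i (s i) e) : N i → K)) = 0 := by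
      funext h
      have := T_bc (K := K) c (fun i => y i (s i)) h
      rw [hy s] at this
      rw [Pi.zero_apply, map_zero] at this
      exact this
    rw [this, smul_zero]
  have hcard : Fintype.card (∀ i, Fin (m+1) → N i → F) = Fintype.card (∀ i, N i → K) := by
    simp [hcK, ← pow_mul, mul_comm]
  rw [hcard] at h1
  have h2 : (Fintype.card (∀ i, N i → K) : ℝ) ≤ (((ZF (cK K c)).card *
      Fintype.card F ^ (ρ * (m+1) ^ Fintype.card ι) : ℕ) : ℝ) := by
    refine h1.trans ?_
    push_cast
    rw [pow_mul]
    gcongr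
  have h3 : Fintype.card (∀ i, N i → K) ≤ ((ZF (cK K c)).card *
      Fintype.card F ^ (ρ * (m+1) ^ Fintype.card ι) : ℕ) := by exact_mod_cast h2
  refine h3.trans ?_
  gcongr
  rw [hcK]
  exact Nat.le_self_pow (by omega) _

theorem coordPLF [Fintype F] [DecidableEq F] [Fintype K] [DecidableEq K]
    (c : (∀ i, N i) → M → F) (m : ℕ) (κ : Module.Basis (Fin (m+1)) F K) (ρ : ℕ)
    (hq1 : 2 * Fintype.card ι < Fintype.card K)
    (hq2 : 2 * (Fintype.card ι * (ρ * (m+1) ^ Fintype.card ι+2)) ^ (Fintype.card ι)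
      ≤ Fintype.card K)
    (hZ : Fintype.card (∀ i, N i → F) ≤ (ZF c).card * Fintype.card F ^ ρ) :
    ∃ (Γ : Type) (_ : Fintype Γ) (J : Γ → Finset ι) (α : Γ → (∀ i, N i → F) → F)
      (A : Γ → (∀ i, N i → F) → M → F),
      Fintype.card Γ ≤ Fintype.card ι * ((ρ * (m+1) ^ Fintype.card ι) * 2 ^ Fintype.card ι) * (m+1) ∧
      (∀ g, (J g).Nonempty) ∧ (∀ g, MLOn F (J g) (α g)) ∧ (∀ g, MLOn F (J g)ᶜ (A g)) ∧
      ∀ x h, T c F x h = ∑ g, α g x * A g x h := by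
  obtain ⟨Γ, hΓ, J, α, A, h1, h2, h3, h4, h5⟩ := coordPL (cK K c) _ hq1 hq2
    (density_ext c m κ ρ hZ)
  obtain ⟨τ, hτ⟩ := LinearMap.exists_leftInverse_of_injective (Algebra.linearMap F K)
    (LinearMap.ker_eq_bot.2 (algebraMap F K).injective)
  have hτ' : ∀ a, τ (algebraMap F K a) = a := fun a => by
    have := LinearMap.congr_fun hτ a
    simpa using this
  refine ⟨Γ × Fin (m+1), inferInstance, fun p => J p.1,
    fun p x => κ.coord p.2 (α p.1 (bc K x)),
    fun p x => (LinearMap.compLeft (τ ∘ₗ LinearMap.mulLeft F (κ p.2)) M) (A p.1 (bc K x)), ?_,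
    fun p => h2 _, fun p => MLOn_desc _ _ (h3 _) _, fun p => MLOn_desc _ _ (h4 _) _, ?_⟩
  · simp only [Fintype.card_prod, Fintype.card_fin]
    gcongr
  · intro x h
    rw [← hτ' (T c F x h), ← T_bc, h5, map_sum, Fintype.sum_prod_type]
    refine Finset.sum_congr rfl fun g _ => ?_
    conv_lhs => rw [← κ.sum_repr (α g (bc K x))]
    rw [Finset.sum_mul, map_sum]
    refine Finset.sum_congr rfl fun l _ => ?_
    simp [smul_mul_assoc]
end Desc

theorem exists_M0 (n : ℕ) : ∃ M0 : ℕ, ∀ m ≥ M0, 2 * n < 2 ^ (m+1) ∧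
    2 * (n * (m * (m+1) ^ n + 2)) ^ n ≤ 2 ^ (m+1) := by
  have h := tendsto_pow_const_div_const_pow_of_one_lt ((n+1)*n) (r := (2:ℝ)) (by norm_num)
  have hpos : (0:ℝ) < 1 / (2 * (3 * n) ^ n + 1) := by positivity
  have h1 := (h.eventually (gt_mem_nhds hpos))
  obtain ⟨M1, hM1⟩ := Filter.eventually_atTop.1 h1
  refine ⟨max M1 (2*n), fun m hm => ⟨?_, ?_⟩⟩
  · have : m + 1 < 2 ^ (m+1) := Nat.lt_two_pow_self
    have := le_trans (le_max_right _ _) hm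
    omega
  · have := hM1 (m+1) (le_trans (le_trans (le_max_left _ _) hm) (by omega))
    rw [div_lt_div_iff₀ (by positivity) (by positivity)] at this
    have h2 : ((m+1)^((n+1)*n) * (2 * (3 * n) ^ n + 1)) ≤ 2 ^ (m+1) := by
      have h3 : (((m+1)^((n+1)*n) * (2 * (3 * n) ^ n + 1) : ℕ) : ℝ) < ((2 ^ (m+1) : ℕ) : ℝ) := by
        push_cast at this ⊢
        linarith
      exact_mod_cast h3.le
    refine le_trans ?_ h2
    have h4 : n * (m * (m+1) ^ n + 2) ≤ (3 * n) * (m+1)^(n+1) := by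
      have h5 : 1 ≤ (m+1)^n := Nat.one_le_pow _ _ (by omega)
      have : m * (m+1) ^ n + 2 ≤ 3 * (m+1)^(n+1) := by
        rw [pow_succ]; nlinarith
      nlinarith
    calc 2 * (n * (m * (m+1) ^ n + 2)) ^ n ≤ 2 * ((3 * n) * (m+1)^(n+1)) ^ n := by gcongr
      _ = (m+1)^((n+1)*n) * (2 * (3 * n) ^ n) := by rw [mul_pow (3*n), ← pow_mul]; ring
      _ ≤ _ := by gcongr; omega
end IAV

namespace IAV
open Function

theorem exists_ext (F : Type) [Field F] [Fintype F] (m : ℕ) : ∃ (K : Type) (_ : Field K)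
    (_ : Algebra F K) (_ : Fintype K), Nonempty (Module.Basis (Fin (m+1)) F K) ∧
      Fintype.card K = Fintype.card F ^ (m+1) := by
  obtain ⟨p, hp⟩ := CharP.exists F
  have : Fact p.Prime := ⟨CharP.char_is_prime F p⟩
  have hfr := FiniteField.finrank_extension F p (m+1)
  let κ := Module.finBasisOfFinrankEq F (FiniteField.Extension F p (m+1)) hfr
  refine ⟨FiniteField.Extension F p (m+1), inferInstance, inferInstance, Fintype.ofFinite _, ⟨κ⟩, ?_⟩
  have := FiniteField.natCard_extension F p (m+1)
  rw [← Nat.card_eq_fintype_card (α := F), ← this]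
  exact (@Nat.card_eq_fintype_card _ (Fintype.ofFinite _)).symm

theorem coordPLC (n : ℕ) : ∃ C D : ℕ, ∀ (ι : Type) [Fintype ι] [DecidableEq ι], Fintype.card ι = n →
    ∀ (N : ι → Type) [∀ i, Fintype (N i)] [∀ i, DecidableEq (N i)] (M : Type) (F : Type) [Field F]
    [Fintype F] [DecidableEq F] (c : (∀ i, N i) → M → F) (ρ : ℕ)
    (hZ : Fintype.card (∀ i, N i → F) ≤ (ZF c).card * Fintype.card F ^ ρ),
    ∃ (Γ : Type) (_ : Fintype Γ) (J : Γ → Finset ι) (α : Γ → (∀ i, N i → F) → F)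
      (A : Γ → (∀ i, N i → F) → M → F),
      Fintype.card Γ ≤ C * (ρ+1)^D ∧
      (∀ g, (J g).Nonempty) ∧ (∀ g, MLOn F (J g) (α g)) ∧ (∀ g, MLOn F (J g)ᶜ (A g)) ∧
      ∀ x h, T c F x h = ∑ g, α g x * A g x h := by
  obtain ⟨M0, hM0⟩ := exists_M0 n
  refine ⟨n * 2^n * (M0+1)^(n+1), n+2, ?_⟩
  intro ι _ _ hn N _ _ M F _ _ _ c ρ hZ
  classical
  obtain ⟨K, _, _, _, ⟨κ⟩, hK⟩ := exists_ext F (M0+ρ)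
  obtain ⟨b1, b2⟩ := hM0 (M0+ρ) (by omega)
  have hF : 2 ≤ Fintype.card F := Fintype.one_lt_card
  have hq : 2 ^ (M0+ρ+1) ≤ Fintype.card K := by
    rw [hK]; gcongr
  obtain ⟨Γ, i1, J, α, A, h1, h2⟩ := coordPLF c (M0+ρ) κ ρ (by rw [hn]; omega) (by
    rw [hn]
    refine le_trans ?_ (b2.trans hq)
    gcongr
    omega) hZ
  refine ⟨Γ, i1, J, α, A, h1.trans ?_, h2⟩
  rw [hn]
  calc n * (ρ * (M0+ρ+1)^n * 2^n) * (M0+ρ+1) = n * 2^n * (ρ * (M0+ρ+1)^(n+1)) := by ring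
    _ ≤ n * 2^n * ((ρ+1) * ((M0+1)*(ρ+1))^(n+1)) := by
      gcongr
      · omega
      · nlinarith
    _ = _ := by rw [mul_pow]; ring

/-- the multilinear map attached to an `MLOn univ` function -/
def MLOn.toML {F : Type} [Field F] {ι : Type} [Fintype ι] [dι : DecidableEq ι] {G : ι → Type}
    [∀ i, AddCommGroup (G i)]
    [∀ i, Module F (G i)] {H : Type} [AddCommGroup H] [Module F H] 
    {f : (∀ i, G i) → H} (hf : MLOn F Finset.univ f) : MultilinearMap F G H where
  toFun := f
  map_update_add' := by
    intro inst x i v w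
    rw [Subsingleton.elim inst dι]
    exact hf.2.1 i (Finset.mem_univ _) x v w
  map_update_smul' := by
    intro inst x i t v
    rw [Subsingleton.elim inst dι]
    exact hf.2.2 i (Finset.mem_univ _) x t v

theorem MLOn_comp {F : Type} [Field F] {ι : Type} [DecidableEq ι] {G G' : ι → Type}
    [∀ i, AddCommGroup (G i)] [∀ i, Module F (G i)] [∀ i, AddCommGroup (G' i)]
    [∀ i, Module F (G' i)] {H H' : Type} [AddCommGroup H] [Module F H] [AddCommGroup H']
    [Module F H'] (J : Finset ι) (f : (∀ i, G' i) → H) (hf : MLOn F J f)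
    (φ : ∀ i, G i →ₗ[F] G' i) (L : H →ₗ[F] H') :
    MLOn F J (fun x : ∀ i, G i => L (f (fun i => φ i (x i)))) := by
  have e : ∀ (x : ∀ i, G i) i v, (fun j => φ j (update x i v j)) =
      update (fun j => φ j (x j)) i (φ i v) := by
    intro x i v
    funext j
    by_cases hj : j = i
    · subst hj; simp
    · simp [update_of_ne hj]
  refine ⟨fun i hi x v => ?_, fun i hi x v w => ?_, fun i hi x t v => ?_⟩
  · simp only [e]; rw [hf.1 i hi]
  · simp only [e]; rw [map_add, hf.2.1 i hi, map_add]
  · simp only [e]; rw [map_smul, hf.2.2 i hi, map_smul]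

open scoped Classical in
theorem PLuniv (n : ℕ) : ∃ C D : ℕ, ∀ (ι : Type) [Fintype ι] [DecidableEq ι], Fintype.card ι = n →
    ∀ (F : Type) [Field F] [Fintype F] (G : ι → Type) [∀ i, AddCommGroup (G i)]
    [∀ i, Module F (G i)] [∀ i, Fintype (G i)] (H : Type) [AddCommGroup H] [Module F H]
    [FiniteDimensional F H] (f : (∀ i, G i) → H) (hf : MLOn F Finset.univ f) (ρ : ℕ)
    (hZ : Fintype.card (∀ i, G i) ≤ (Finset.univ.filter fun x => f x = 0).card * Fintype.card F ^ ρ),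
    ∃ (Γ : Type) (_ : Fintype Γ) (J : Γ → Finset ι) (α : Γ → (∀ i, G i) → F)
      (A : Γ → (∀ i, G i) → H),
      Fintype.card Γ ≤ C * (ρ+1)^D ∧
      (∀ g, (J g).Nonempty) ∧ (∀ g, MLOn F (J g) (α g)) ∧ (∀ g, MLOn F (J g)ᶜ (A g)) ∧
      ∀ x, f x = ∑ g, α g x • A g x := by
  obtain ⟨C, D, hCD⟩ := coordPLC n
  refine ⟨C, D, ?_⟩
  intro ι _ _ hn F _ _ G _ _ _ H _ _ _ f hf ρ hZ
  let b : ∀ i, Module.Basis (Fin (Module.finrank F (G i))) F (G i) := fun i => Module.finBasis F (G i)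
  let bH := Module.finBasis F H
  let fm := hf.toML
  let c : (∀ i, Fin (Module.finrank F (G i))) → Fin (Module.finrank F H) → F :=
    fun e h => bH.equivFun (f (fun i => b i (e i))) h
  have key : ∀ x : ∀ i, G i, T c F (fun i => (b i).equivFun (x i)) = bH.equivFun (f x) := by
    intro x
    have e1 : f x = fm (fun i => ∑ e, (b i).equivFun (x i) e • b i e) := by
      change f x = f _
      congr 1
      funext i
      exact ((b i).sum_equivFun (x i)).symm
    funext h
    rw [e1, MultilinearMap.map_sum, T_apply, map_sum, Finset.sum_apply]
    refine Finset.sum_congr rfl fun e _ => ?_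
    rw [MultilinearMap.map_smul_univ, map_smul, Pi.smul_apply, smul_eq_mul]
    rfl
  let E : (∀ i, G i) ≃ (∀ i, Fin (Module.finrank F (G i)) → F) :=
    Equiv.piCongrRight fun i => (b i).equivFun.toEquiv
  have hE : ∀ x, E x = fun i => (b i).equivFun (x i) := fun x => rfl
  obtain ⟨Γ, i1, J, α, A, h1, h2, h3, h4, h5⟩ := hCD ι hn (fun i => Fin (Module.finrank F (G i)))
    (Fin (Module.finrank F H)) F c ρ (by
      rw [← Fintype.card_congr E]
      refine hZ.trans ?_
      gcongr
      refine Finset.card_le_card_of_injOn E ?_ E.injective.injOn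
      intro x hx
      simp only [Finset.coe_filter, Finset.mem_univ, true_and, Set.mem_ofPred_eq] at hx
      simp only [ZF, Finset.coe_filter, Finset.mem_univ, true_and, Set.mem_ofPred_eq]
      rw [hE, key, hx, map_zero])
  refine ⟨Γ, i1, J, fun g x => LinearMap.id (R := F) (α g (fun i => (b i).equivFun (x i))),
    fun g x => bH.equivFun.symm.toLinearMap (A g (fun i => (b i).equivFun (x i))), h1, h2,
    fun g => MLOn_comp _ _ (h3 g) (fun i => (b i).equivFun.toLinearMap) _,
    fun g => MLOn_comp _ _ (h4 g) (fun i => (b i).equivFun.toLinearMap) _, ?_⟩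
  intro x
  apply bH.equivFun.injective
  rw [← key]
  funext h
  rw [h5, map_sum, Finset.sum_apply]
  refine Finset.sum_congr rfl fun g _ => ?_
  rw [map_smul, LinearEquiv.coe_coe, LinearEquiv.apply_symm_apply]
  rfl
end IAV

namespace IAV
open Function
section Sub
variable {F : Type} [Field F] {ι : Type} [Fintype ι] [DecidableEq ι] {G : ι → Type}
    [∀ i, AddCommGroup (G i)] [∀ i, Module F (G i)] {H : Type} [AddCommGroup H] [Module F H]

theorem MLOn_congr {J : Finset ι} {f : (∀ i, G i) → H} (hf : MLOn F J f) {x y : ∀ i, G i}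
    (h : ∀ i ∈ J, x i = y i) : f x = f y := by
  have key : ∀ S : Finset ι, (∀ i ∈ S, i ∉ J) → f (S.piecewise y x) = f x := by
    intro S
    induction S using Finset.induction_on with
    | empty => intro _; simp
    | insert j S hj ih =>
      intro hS
      rw [Finset.piecewise_insert, hf.1 j (hS j (by simp))]
      exact ih fun i hi => hS i (by simp [hi])
  rw [← key Jᶜ (by simp)]
  congr 1
  funext i
  by_cases hi : i ∈ J
  · simp [Finset.piecewise, hi, h i hi]
  · simp [Finset.piecewise, hi]

/-- restriction to coordinates in `I` -/
def res (I : Finset ι) (x : ∀ i, G i) : ∀ i : I, G i := fun i => x i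

/-- extension by zero -/
def extz (I : Finset ι) (y : ∀ i : I, G i) : ∀ i, G i := fun i => if h : i ∈ I then y ⟨i, h⟩ else 0

theorem res_update_mem (I : Finset ι) (x : ∀ i, G i) (i : ι) (hi : i ∈ I) (v : G i) :
    res I (update x i v) = update (res I x) ⟨i, hi⟩ v := by
  funext j
  by_cases hj : j = ⟨i, hi⟩
  · subst hj; simp [res]
  · have : (j : ι) ≠ i := fun h => hj (Subtype.ext h)
    simp [res, update_of_ne hj, update_of_ne this]

theorem res_update_not (I : Finset ι) (x : ∀ i, G i) (i : ι) (hi : i ∉ I) (v : G i) :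
    res I (update x i v) = res I x := by
  funext j
  have : (j : ι) ≠ i := fun h => hi (h ▸ j.2)
  simp [res, update_of_ne this]

theorem extz_update (I : Finset ι) (y : ∀ i : I, G i) (i : I) (v : G i) :
    extz I (update y i v) = update (extz I y) i v := by
  funext j
  by_cases hj : j = i
  · subst hj; simp [extz]
  · rw [update_of_ne hj]
    unfold extz
    split_ifs with h
    · rw [update_of_ne]
      intro h'; exact hj (by rw [← h'])
    · rfl

theorem MLOn_res (I : Finset ι) (J : Finset I) (f : (∀ i : I, G i) → H) (hf : MLOn F J f) :
    MLOn F (J.map (Embedding.subtype _)) (fun x : ∀ i, G i => f (res I x)) := by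
  refine ⟨fun i hi x v => ?_, fun i hi x v w => ?_, fun i hi x t v => ?_⟩
  · by_cases h : i ∈ I
    · simp only [res_update_mem I _ i h]
      refine hf.1 ⟨i, h⟩ (fun h' => hi ?_) _ _
      simpa using ⟨h, h'⟩
    · simp only [res_update_not I _ i h]
  · obtain ⟨h, h'⟩ : ∃ h : i ∈ I, ⟨i, h⟩ ∈ J := by simpa using hi
    simp only [res_update_mem I _ i h]
    exact hf.2.1 ⟨i, h⟩ h' _ _ _
  · obtain ⟨h, h'⟩ : ∃ h : i ∈ I, ⟨i, h⟩ ∈ J := by simpa using hi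
    simp only [res_update_mem I _ i h]
    exact hf.2.2 ⟨i, h⟩ h' _ _ _

theorem MLOn_extz (I : Finset ι) (f : (∀ i, G i) → H) (hf : MLOn F I f) :
    MLOn F Finset.univ (fun y : ∀ i : I, G i => f (extz I y)) := by
  refine ⟨fun i hi => absurd (Finset.mem_univ _) hi, fun i hi x v w => ?_, fun i hi x t v => ?_⟩
  · simp only [extz_update]
    exact hf.2.1 i i.2 _ _ _
  · simp only [extz_update]
    exact hf.2.2 i i.2 _ _ _

theorem f_res (I : Finset ι) (f : (∀ i, G i) → H) (hf : MLOn F I f) (x) :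
    f (extz I (res I x)) = f x := by
  apply MLOn_congr hf
  intro i hi
  simp [extz, res, hi]

theorem card_res [∀ i, Fintype (G i)] (I : Finset ι) (P : (∀ i : I, G i) → Prop) [DecidablePred P]
    [DecidablePred fun x : ∀ i, G i => P (res I x)] :
    (Finset.univ.filter fun x : ∀ i, G i => P (res I x)).card =
      (Finset.univ.filter P).card * Fintype.card (∀ i : {i // i ∉ I}, G i) := by
  rw [← Finset.card_univ (α := ∀ i : {i // i ∉ I}, G i), ← Finset.card_product]
  refine Finset.card_equiv (Equiv.piEquivPiSubtypeProd (· ∈ I) G) ?_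
  intro x
  simp
  rfl
end Sub

open scoped Classical in
theorem PLsub (n : ℕ) : ∃ C D : ℕ, ∀ (ι : Type) [Fintype ι] [DecidableEq ι] (I : Finset ι)
    (hI : I.card = n)
    (F : Type) [Field F] [Fintype F] (G : ι → Type) [∀ i, AddCommGroup (G i)]
    [∀ i, Module F (G i)] [∀ i, Fintype (G i)] (H : Type) [AddCommGroup H] [Module F H]
    [FiniteDimensional F H] (f : (∀ i, G i) → H) (hf : MLOn F I f) (ρ : ℕ)
    (hZ : Fintype.card (∀ i, G i) ≤ (Finset.univ.filter fun x => f x = 0).card * Fintype.card F ^ ρ),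
    ∃ (Γ : Type) (_ : Fintype Γ) (J : Γ → Finset ι) (J' : Γ → Finset ι) (α : Γ → (∀ i, G i) → F)
      (A : Γ → (∀ i, G i) → H),
      Fintype.card Γ ≤ C * (ρ+1)^D ∧
      (∀ g, J' g ⊂ I) ∧ (∀ g, MLOn F (J g) (α g)) ∧ (∀ g, MLOn F (J' g) (A g)) ∧
      ∀ x, f x = ∑ g, α g x • A g x := by
  obtain ⟨C, D, hCD⟩ := PLuniv n
  refine ⟨C, D, ?_⟩
  intro ι _ _ I hI F _ _ G _ _ _ H _ _ _ f hf ρ hZ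
  have hrest : 0 < Fintype.card (∀ i : {i // i ∉ I}, G i) := Fintype.card_pos
  obtain ⟨Γ, i1, J, α, A, h1, h2, h3, h4, h5⟩ := hCD I (by simp [hI]) F (fun i => G i) H
    (fun y => f (extz I y)) (MLOn_extz I f hf) ρ (by
      have e1 := card_res I (fun y : ∀ i : I, G i => f (extz I y) = 0)
      simp only [f_res I f hf] at e1
      have e2 := card_res I (fun y : ∀ i : I, G i => True)
      simp only [Finset.filter_true, Finset.card_univ] at e2
      rw [e1, e2] at hZ
      refine Nat.le_of_mul_le_mul_right ?_ hrest
      refine hZ.trans (le_of_eq ?_)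
      ring)
  refine ⟨Γ, i1, _, _, fun g x => α g (res I x), fun g x => A g (res I x), h1, ?_,
    fun g => MLOn_res I _ _ (h3 g), fun g => MLOn_res I _ _ (h4 g), fun x => ?_⟩
  · intro g
    rw [Finset.ssubset_iff_subset_ne]
    constructor
    · intro i hi
      simp only [Finset.mem_map, Embedding.coe_subtype] at hi
      obtain ⟨j, _, rfl⟩ := hi
      exact j.2
    · intro h
      obtain ⟨j, hj⟩ := h2 g
      have := h.symm.subset j.2
      simp [hj] at this
  · rw [← h5, f_res I f hf]
end IAV

namespace IAV
open Function
section Alt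
variable {F : Type} [Field F] {ι : Type} [Fintype ι] [DecidableEq ι] {G : ι → Type}
    [∀ i, AddCommGroup (G i)] [∀ i, Module F (G i)] {H : Type} [AddCommGroup H] [Module F H]

/-- alternating sum over a cube -/
def Alt (I : Finset ι) (f : (∀ i, G i) → H) (y0 y1 : ∀ i, G i) : H :=
  ∑ S ∈ I.powerset, (-1 : ℤ) ^ S.card • f (S.piecewise y1 y0)

theorem Alt_insert (I : Finset ι) (i : ι) (hi : i ∉ I) (f : (∀ i, G i) → H) (y0 y1 : ∀ i, G i) :
    Alt (insert i I) f y0 y1 = Alt I f y0 y1 - Alt I f (update y0 i (y1 i)) y1 := by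
  unfold Alt
  rw [Finset.sum_powerset_insert hi, sub_eq_add_neg, ← Finset.sum_neg_distrib]
  congr 1
  refine Finset.sum_congr rfl fun S hS => ?_
  have hiS : i ∉ S := fun h => hi (Finset.mem_powerset.1 hS h)
  rw [Finset.card_insert_of_notMem hiS, pow_succ, mul_neg_one, neg_smul,
    Finset.piecewise_insert, Finset.update_piecewise_of_notMem _ _ _ hiS]

theorem Alt_kill (I : Finset ι) (i : ι) (hi : i ∈ I) (f : (∀ i, G i) → H)
    (hf : ∀ x v, f (update x i v) = f x) (y0 y1 : ∀ i, G i) : Alt I f y0 y1 = 0 := by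
  rw [← Finset.insert_erase hi, Alt_insert _ _ (Finset.notMem_erase _ _), sub_eq_zero]
  unfold Alt
  refine Finset.sum_congr rfl fun S hS => ?_
  have hiS : i ∉ S := fun h => Finset.notMem_erase i I (Finset.mem_powerset.1 hS h)
  rw [← Finset.update_piecewise_of_notMem _ _ _ hiS, hf]

theorem Alt_ml {I : Finset ι} {f : (∀ i, G i) → H} (hf : MLOn F I f) (S : Finset ι) (hS : S ⊆ I)
    (y1 : ∀ i, G i) : ∀ y0, Alt S f y0 y1 = f (S.piecewise (y0 - y1) y0) := by
  induction S using Finset.induction_on with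
  | empty => intro y0; simp [Alt]
  | insert i S hi ih =>
    intro y0
    have hiI : i ∈ I := hS (Finset.mem_insert_self _ _)
    have ih' := ih fun j hj => hS (Finset.mem_insert_of_mem hj)
    rw [Alt_insert _ _ hi, ih', ih', Finset.piecewise_insert]
    have e1 : S.piecewise (y0 - y1) y0 = update (S.piecewise (y0 - y1) y0) i (y0 i) := by
      funext j
      by_cases hj : j = i
      · subst hj; simp [hi]
      · simp [update_of_ne hj]
    have e2 : S.piecewise (update y0 i (y1 i) - y1) (update y0 i (y1 i)) =
        update (S.piecewise (y0 - y1) y0) i (y1 i) := by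
      funext j
      by_cases hj : j = i
      · subst hj; simp [hi]
      · by_cases hjS : j ∈ S
        · simp [update_of_ne hj, hjS]
        · simp [update_of_ne hj, hjS]
    rw [e2]
    have h3 := hf.2.1 i hiI (S.piecewise (y0 - y1) y0) (y0 i - y1 i) (y1 i)
    rw [sub_add_cancel, ← e1] at h3
    rw [h3, Pi.sub_apply, add_sub_cancel_right]

theorem Alt_sum {κ : Type} (s : Finset κ) (I : Finset ι) (f : κ → (∀ i, G i) → H)
    (lam : κ → F) (y0 y1) : Alt I (fun x => ∑ j ∈ s, lam j • f j x) y0 y1 =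
      ∑ j ∈ s, lam j • Alt I (f j) y0 y1 := by
  unfold Alt
  simp only [Finset.smul_sum]
  rw [Finset.sum_comm]
  refine Finset.sum_congr rfl fun j _ => Finset.sum_congr rfl fun S _ => ?_
  rw [smul_comm]

theorem MLOn_sum {κ : Type} (s : Finset κ) (I : Finset ι) (f : κ → (∀ i, G i) → H)
    (hf : ∀ j ∈ s, MLOn F I (f j)) (lam : κ → F) : MLOn F I (fun x => ∑ j ∈ s, lam j • f j x) := by
  refine ⟨fun i hi x v => ?_, fun i hi x v w => ?_, fun i hi x t v => ?_⟩
  · exact Finset.sum_congr rfl fun j hj => by rw [(hf j hj).1 i hi]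
  · rw [← Finset.sum_add_distrib]
    exact Finset.sum_congr rfl fun j hj => by rw [(hf j hj).2.1 i hi, smul_add]
  · rw [Finset.smul_sum]
    exact Finset.sum_congr rfl fun j hj => by rw [(hf j hj).2.2 i hi, smul_comm]

open scoped Classical in
theorem top_density [Fintype F] [∀ i, Fintype (G i)] {κ : Type} [Fintype κ] (J : κ → Finset ι)
    (B : κ → (∀ i, G i) → H) (hB : ∀ j, MLOn F (J j) (B j)) (I : Finset ι)
    (hI : ∀ j, I ⊆ J j → J j = I) (lam : κ → F) (e : ℕ)
    (hZ : Fintype.card (∀ i, G i) ≤ (Finset.univ.filter fun x => ∑ j, lam j • B j x = 0).card *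
      Fintype.card F ^ e) :
    Fintype.card (∀ i, G i) ≤ (Finset.univ.filter fun x =>
      ∑ j ∈ Finset.univ.filter (fun j => J j = I), lam j • B j x = 0).card *
      Fintype.card F ^ (e * 2 ^ Fintype.card ι) := by
  have h1 := copy_bound (Y := G) (fun x => ∑ j, lam j • B j x = 0) 1
    ((Fintype.card F : ℝ) ^ e) (by positivity) (by exact_mod_cast hZ)
  have h2 : Fintype.card (∀ i, Fin 2 → G i) ≤ (Finset.univ.filter fun y : (∀ i, Fin 2 → G i) =>
        ∀ s : ι → Fin 2, ∑ j, lam j • B j (fun i => y i (s i)) = 0).card *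
      Fintype.card F ^ (e * 2 ^ Fintype.card ι) := by
    rw [pow_mul]
    exact_mod_cast h1
  have h3 : (Finset.univ.filter fun y : (∀ i, Fin 2 → G i) =>
        ∀ s : ι → Fin 2, ∑ j, lam j • B j (fun i => y i (s i)) = 0).card ≤
      (Finset.univ.filter fun x =>
      ∑ j ∈ Finset.univ.filter (fun j => J j = I), lam j • B j x = 0).card *
      Fintype.card (∀ i, G i) := by
    rw [← Finset.card_univ (α := ∀ i, G i), ← Finset.card_product]
    refine Finset.card_le_card_of_injOn
      (fun y => ((fun i => y i 0) - (fun i => y i 1), fun i => y i 0)) ?_ ?_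
    · intro y hy
      simp only [Finset.coe_filter, Finset.mem_univ, true_and, Set.mem_ofPred_eq] at hy
      simp only [Finset.coe_product, Finset.coe_filter, Finset.mem_univ, true_and, Finset.coe_univ,
        Set.mem_prod, Set.mem_ofPred_eq, Set.mem_univ, and_true]
      have h4 : Alt I (fun x => ∑ j, lam j • B j x) (fun i => y i 0) (fun i => y i 1) = 0 := by
        refine Finset.sum_eq_zero fun S _ => ?_
        have := hy (fun i => if i ∈ S then 1 else 0)
        have e1 : (fun i => y i (if i ∈ S then 1 else 0)) =
            S.piecewise (fun i => y i 1) (fun i => y i 0) := by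
          funext i
          by_cases h : i ∈ S <;> simp [h]
        rw [e1] at this
        exact (congrArg _ this).trans (smul_zero _)
      have hML : MLOn F I (fun x => ∑ j ∈ Finset.univ.filter (fun j => J j = I), lam j • B j x) :=
        MLOn_sum _ I B (fun j hj => by
          have := hB j
          rwa [(Finset.mem_filter.1 hj).2] at this) lam
      rw [Alt_sum, ← Finset.sum_filter_add_sum_filter_not _ (fun j => J j = I)] at h4
      rw [Finset.sum_eq_zero (s := Finset.univ.filter fun j => ¬ J j = I)] at h4
      · rw [add_zero, ← Alt_sum, Alt_ml hML I subset_rfl] at h4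
        rw [← h4]
        refine Finset.sum_congr rfl fun j hj => ?_
        have : MLOn F I (B j) := (Finset.mem_filter.1 hj).2 ▸ hB j
        rw [MLOn_congr this]
        intro i hi
        simp [hi]
      · intro j hj
        have hj' := (Finset.mem_filter.1 hj).2
        obtain ⟨i, hi, hiJ⟩ := Finset.not_subset.1 (fun h => hj' (hI j h))
        rw [Alt_kill I i hi _ ((hB j).1 i hiJ), smul_zero]
    · intro y _ y' _ h
      simp only [Prod.mk.injEq] at h
      obtain ⟨ha, hb⟩ := h
      rw [hb] at ha
      have hc := sub_right_injective ha
      funext i t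
      fin_cases t
      · exact congrFun hb i
      · exact congrFun hc i
  have hpos : 0 < Fintype.card (∀ i, G i) := Fintype.card_pos
  have hsq : Fintype.card (∀ i, Fin 2 → G i) = Fintype.card (∀ i, G i) * Fintype.card (∀ i, G i) := by
    simp [sq, Finset.prod_mul_distrib]
  rw [hsq] at h2
  refine Nat.le_of_mul_le_mul_right (h2.trans ((Nat.mul_le_mul_right _ h3).trans (le_of_eq ?_))) hpos
  ring
end Alt
end IAV

namespace IAV
open Function

open scoped Classical in
/-- simultaneous inner approximation for families with index sets in `II` -/
def MainStmt (ι : Type) [Fintype ι] [DecidableEq ι] (II : Finset (Finset ι)) (C D : ℕ) : Prop :=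
  ∀ (F : Type) [Field F] [Fintype F] (G : ι → Type) [∀ i, AddCommGroup (G i)]
    [∀ i, Module F (G i)] [∀ i, Fintype (G i)] (H : Type) [AddCommGroup H] [Module F H]
    [FiniteDimensional F H] (κ : Type) [Fintype κ] (J : κ → Finset ι) (B : κ → (∀ i, G i) → H),
    (∀ j, J j ∈ II) → (∀ j, MLOn F (J j) (B j)) → ∀ e : ℕ,
    ∃ (σ : Type) (_ : Fintype σ) (β : (∀ i, G i) → σ → F),
      Fintype.card σ ≤ C * ((Fintype.card κ + 1) * (e + 1)) ^ D ∧
      (∀ t, ∃ J', MLOn F J' (fun x => β x t)) ∧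
      ∀ lam : κ → F, ∃ S : Finset (σ → F),
        (∀ x, β x ∈ S → ∑ j, lam j • B j x = 0) ∧
        (Finset.univ.filter fun x => ∑ j, lam j • B j x = 0 ∧ β x ∉ S).card * Fintype.card F ^ e ≤
          Fintype.card (∀ i, G i)

theorem size_bound (C' D' C1 D1 k r e m g s' : ℕ) (hm : m ≤ r) (hg : g ≤ m * (C1 * (e * 2^k + 1)^D1))
    (hs : s' ≤ C' * ((r + g + 1) * (e + g + 1)) ^ D') :
    s' + g ≤ (C' * (C1 * (2^k)^D1 + 1)^(2*D') + C1 * (2^k)^D1) *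
      ((r+1) * (e+1)) ^ (2 * (D1+1) * D' + (D1+1)) := by
  set U := (r+1) * (e+1) with hU
  set C2 := C1 * (2^k)^D1 with hC2
  have hU1 : 1 ≤ U := Nat.succ_le_of_lt (by positivity)
  have h2k : 1 ≤ 2^k := Nat.one_le_two_pow
  have hrU : r + 1 ≤ U := by rw [hU]; nlinarith
  have heU : e + 1 ≤ U := by rw [hU]; nlinarith
  have hUp : U ≤ U^(D1+1) := Nat.le_self_pow (by omega) _
  have hgU : g ≤ C2 * U^(D1+1) := by
    calc g ≤ m * (C1 * (e * 2^k + 1)^D1) := hg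
      _ ≤ U * (C1 * (2^k * U)^D1) := by
        gcongr
        · omega
        · nlinarith
      _ = C2 * U^(D1+1) := by rw [hC2, mul_pow]; ring
  have ha : r + g + 1 ≤ (C2+1) * U^(D1+1) := by rw [add_mul, one_mul]; omega
  have hb : e + g + 1 ≤ (C2+1) * U^(D1+1) := by rw [add_mul, one_mul]; omega
  have hs2 : s' ≤ C' * (C2+1)^(2*D') * U^(2 * (D1+1) * D') := by
    refine hs.trans ?_
    calc C' * ((r + g + 1) * (e + g + 1)) ^ D' ≤
        C' * (((C2+1) * U^(D1+1)) * ((C2+1) * U^(D1+1))) ^ D' := by gcongr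
      _ = C' * (C2+1)^(2*D') * U^(2 * (D1+1) * D') := by
        rw [show ((C2+1) * U^(D1+1)) * ((C2+1) * U^(D1+1)) = (C2+1)^2 * U^(2*(D1+1)) by ring,
          mul_pow, ← pow_mul, ← pow_mul]; ring
  rw [add_mul]
  refine add_le_add (hs2.trans ?_) (hgU.trans ?_)
  · exact Nat.mul_le_mul_left _ (Nat.pow_le_pow_right hU1 (Nat.le_add_right _ _))
  · exact Nat.mul_le_mul_left _ (Nat.pow_le_pow_right hU1 (Nat.le_add_left _ _))

theorem exists_span {F : Type} [Field F] {κ : Type} [Fintype κ] (Λ : Set (κ → F)) :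
    ∃ (m : ℕ) (v : Fin m → κ → F), m ≤ Fintype.card κ ∧ (∀ l, v l ∈ Λ) ∧
      ∀ lam ∈ Λ, ∃ a : Fin m → F, ∑ l, a l • v l = lam := by
  obtain ⟨v, h1, h2, h3⟩ := Submodule.exists_fun_fin_finrank_span_eq F Λ
  refine ⟨_, v, ?_, h1, fun lam hl => ?_⟩
  · exact (Submodule.finrank_le _).trans (by simp)
  · have : lam ∈ Submodule.span F (Set.range v) := by
      rw [h2]; exact Submodule.subset_span hl
    exact (Submodule.mem_span_range_iff_exists_fun F).1 this

theorem main_step (ι : Type) [Fintype ι] [DecidableEq ι] (II : Finset (Finset ι)) (I : Finset ι)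
    (hII : ∀ J ∈ II, ∀ J', J' ⊆ J → J' ∈ II) (hI : I ∈ II) (hmax : ∀ J ∈ II, I ⊆ J → J = I)
    (C' D' : ℕ) (ih : MainStmt ι (II.erase I) C' D') : ∃ C D, MainStmt ι II C D := by
  classical
  obtain ⟨C1, D1, hPL⟩ := PLsub I.card
  refine ⟨(C' * (C1 * (2^(Fintype.card ι))^D1 + 1)^(2*D') + C1 * (2^(Fintype.card ι))^D1),
    2 * (D1+1) * D' + (D1+1), ?_⟩
  intro F _ _ G _ _ _ H _ _ _ κ _ J B hJ hB e
  let Λ : Set (κ → F) := {lam | Fintype.card (∀ i, G i) ≤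
    (Finset.univ.filter fun x => ∑ j, lam j • B j x = 0).card * Fintype.card F ^ e}
  obtain ⟨m, v, hm, hv, hspan⟩ := exists_span Λ
  have hex := fun l : Fin m => hPL ι I rfl F G H
    (fun x => ∑ j ∈ Finset.univ.filter (fun j => J j = I), v l j • B j x)
    (MLOn_sum _ I B (fun j hj => by
          have := hB j
          rwa [(Finset.mem_filter.1 hj).2] at this) (v l)) (e * 2 ^ Fintype.card ι)
    (by
      have := top_density J B hB I (fun j hj => hmax _ (hJ j) hj) (v l) e (by
        have := hv l
        simp only [Λ, Set.mem_ofPred_eq] at this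
        convert this)
      convert this)
  choose Γ iΓ JJ JJ' α A hΓ hJ' hα hA hsum using hex
  let P := Σ l, Γ l
  have hP : Fintype.card P ≤ m * (C1 * (e * 2^(Fintype.card ι) + 1)^D1) := by
    simp only [P, Fintype.card_sigma]
    refine (Finset.sum_le_card_nsmul _ _ _ (fun l _ => hΓ l)).trans ?_
    simp
  let κ' := {j // J j ≠ I} ⊕ P
  let Jn : κ' → Finset ι := Sum.elim (fun j => J j.1) (fun p => JJ' p.1 p.2)
  let Bn : κ' → (∀ i, G i) → H := Sum.elim (fun j => B j.1) (fun p => A p.1 p.2)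
  obtain ⟨σ', iσ, β', hσ', hβ', happ⟩ := ih F G H κ' Jn Bn
    (by
      rintro (j | p)
      · exact Finset.mem_erase.2 ⟨j.2, hJ _⟩
      · refine Finset.mem_erase.2 ⟨(hJ' p.1 p.2).ne, hII I hI _ (hJ' p.1 p.2).subset⟩)
    (by
      rintro (j | p)
      · exact hB _
      · exact hA _ _)
    (e + Fintype.card P)
  refine ⟨σ' ⊕ P, inferInstance, fun x => Sum.elim (β' x) (fun p => α p.1 p.2 x), ?_, ?_, ?_⟩
  · rw [Fintype.card_sum]
    refine size_bound C' D' C1 D1 (Fintype.card ι) (Fintype.card κ) e m (Fintype.card P) _ hm hP ?_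
    refine hσ'.trans ?_
    gcongr
    simp only [κ', Fintype.card_sum]
    gcongr
    exact Fintype.card_subtype_le _
  · rintro (t | p)
    · exact hβ' t
    · exact ⟨_, hα p.1 p.2⟩
  · intro lam
    by_cases hlam : lam ∈ Λ
    swap
    · refine ⟨∅, by simp, ?_⟩
      simp only [Λ, Set.mem_ofPred_eq, not_le] at hlam
      refine le_trans (le_of_eq ?_) hlam.le
      congr 2
      ext x; simp
    obtain ⟨a, ha⟩ := hspan lam hlam
    let ln : (P → F) → κ' → F := fun w => Sum.elim (fun j => lam j.1) (fun p => a p.1 * w p)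
    choose S' hS1 hS2 using fun w => happ (ln w)
    have key : ∀ x, ∑ j, lam j • B j x = ∑ j, ln (fun p => α p.1 p.2 x) j • Bn j x := by
      intro x
      rw [← Finset.sum_filter_add_sum_filter_not _ (fun j => J j = I), Fintype.sum_sum_type, add_comm]
      congr 1
      · simp only [ln, Bn, Sum.elim_inl]
        exact Finset.sum_subtype (Finset.univ.filter fun j => ¬ J j = I) (by simp)
          (fun j => lam j • B j x)
      · simp only [ln, Bn, Sum.elim_inr, P]
        rw [Fintype.sum_sigma]
        simp only [mul_smul, ← Finset.smul_sum]
        simp only [← hsum]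
        simp only [Finset.smul_sum, smul_smul]
        rw [Finset.sum_comm]
        refine Finset.sum_congr rfl fun j _ => ?_
        rw [← Finset.sum_smul, ← ha]
        simp [Finset.sum_apply]
    refine ⟨Finset.univ.filter fun μ => (fun t => μ (Sum.inl t)) ∈ S' (fun p => μ (Sum.inr p)), ?_, ?_⟩
    · intro x hx
      simp only [Finset.mem_filter, Finset.mem_univ, true_and, Sum.elim_inl, Sum.elim_inr] at hx
      rw [key]
      exact hS1 _ x hx
    · have hq : 0 < Fintype.card F ^ Fintype.card P := by
        have : 0 < Fintype.card F := Fintype.card_pos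
        positivity
      have hsub : (Finset.univ.filter fun x => ∑ j, lam j • B j x = 0 ∧
          (Sum.elim (β' x) (fun p : P => α p.1 p.2 x)) ∉ Finset.univ.filter fun μ : σ' ⊕ P → F =>
            (fun t => μ (Sum.inl t)) ∈ S' (fun p => μ (Sum.inr p))) ⊆
          Finset.univ.biUnion (fun w : P → F =>
            Finset.univ.filter fun x => ∑ j, ln w j • Bn j x = 0 ∧ β' x ∉ S' w) := by
        intro x hx
        simp only [Finset.mem_filter, Finset.mem_univ, true_and, Sum.elim_inl, Sum.elim_inr] at hx
        simp only [Finset.mem_biUnion, Finset.mem_univ, true_and, Finset.mem_filter]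
        exact ⟨fun p => α p.1 p.2 x, (key x).symm.trans hx.1, hx.2⟩
      have hc := (Finset.card_le_card hsub).trans Finset.card_biUnion_le
      refine Nat.le_of_mul_le_mul_right ?_ hq
      rw [mul_assoc, ← pow_add]
      refine (Nat.mul_le_mul_right _ hc).trans ?_
      rw [Finset.sum_mul]
      refine (Finset.sum_le_card_nsmul _ _ (Fintype.card (∀ i, G i)) (fun w _ => ?_)).trans ?_
      · convert hS2 w
      · simp [mul_comm]

theorem main_all (ι : Type) [Fintype ι] [DecidableEq ι] (II : Finset (Finset ι))
    (hII : ∀ J ∈ II, ∀ J', J' ⊆ J → J' ∈ II) : ∃ C D, MainStmt ι II C D := by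
  classical
  induction II using Finset.strongInduction with
  | H II ih =>
    rcases II.eq_empty_or_nonempty with h | h
    · refine ⟨0, 0, ?_⟩
      intro F _ _ G _ _ _ H _ _ _ κ _ J B hJ hB e
      subst h
      have : IsEmpty κ := ⟨fun j => by simpa using hJ j⟩
      exact ⟨Empty, inferInstance, fun _ t => t.elim, by simp, fun t => t.elim,
        fun lam => ⟨Finset.univ, by simp, by
          rw [Finset.filter_eq_empty_iff.2 (fun x _ h => h.2 (Finset.mem_univ _))]; simp⟩⟩
    · obtain ⟨I, hI⟩ := II.exists_maximal h
      have hmax : ∀ J ∈ II, I ⊆ J → J = I := fun J hJ hIJ =>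
        Finset.Subset.antisymm (hI.2 hJ hIJ) hIJ
      obtain ⟨C', D', h'⟩ := ih (II.erase I) (Finset.erase_ssubset hI.1) (by
        intro J hJ J' hJ'
        rw [Finset.mem_erase] at hJ ⊢
        refine ⟨?_, hII J hJ.2 J' hJ'⟩
        rintro rfl
        exact hJ.1 (hmax J hJ.2 hJ'))
      exact main_step ι II I hII hI.1 hmax C' D' h'
end IAV

namespace IAV
open Function
section Dec
variable {F : Type} [Field F] {ι : Type} [Fintype ι] [DecidableEq ι] {G : ι → Type}
    [∀ i, AddCommGroup (G i)] [∀ i, Module F (G i)] {H : Type} [AddCommGroup H] [Module F H]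

/-- multilinear components of a multiaffine map -/
def cmp (I : Finset ι) (f : (∀ i, G i) → H) (x : ∀ i, G i) : H := (-1 : ℤ) ^ I.card • Alt I f 0 x

theorem sum_Alt (f : (∀ i, G i) → H) (x : ∀ i, G i) (S : Finset ι) : ∀ y0,
    ∑ I ∈ S.powerset, (-1 : ℤ) ^ I.card • Alt I f y0 x = f (S.piecewise x y0) := by
  induction S using Finset.induction_on with
  | empty => intro y0; simp [Alt]
  | insert i S hi ih =>
    intro y0
    rw [Finset.sum_powerset_insert hi, Finset.piecewise_insert,
      Finset.update_piecewise_of_notMem _ _ _ hi, ← ih, ← Finset.sum_add_distrib]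
    refine Finset.sum_congr rfl fun I hI => ?_
    have hiI : i ∉ I := fun h => hi (Finset.mem_powerset.1 hI h)
    rw [Finset.card_insert_of_notMem hiI, pow_succ, mul_neg_one, neg_smul, Alt_insert _ _ hiI,
      smul_sub]
    abel

theorem sum_cmp (f : (∀ i, G i) → H) (x : ∀ i, G i) : ∑ I, cmp I f x = f x := by
  have := sum_Alt f x Finset.univ 0
  rw [Finset.powerset_univ, Finset.piecewise_univ] at this
  exact this

theorem pw_update (S : Finset ι) (i : ι) (hi : i ∉ S) (x y : ∀ i, G i) (v : G i) :
    S.piecewise (update x i v) y = S.piecewise x y := by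
  funext j
  by_cases hj : j = i
  · subst hj; simp [hi]
  · simp [Finset.piecewise, update_of_ne hj]

theorem Alt_lin (f : (∀ i, G i) → H) (hf : IsMultiaffine F f) (I : Finset ι) (i : ι) (hi : i ∈ I)
    (x : ∀ i, G i) : ∃ L : G i →ₗ[F] H, ∀ v, Alt I f 0 (update x i v) = L v := by
  choose g h hg using fun S : Finset ι => hf i (S.piecewise x 0)
  refine ⟨-∑ S ∈ (I.erase i).powerset, (-1 : ℤ) ^ S.card • g S, fun v => ?_⟩
  rw [← Finset.insert_erase hi, Alt_insert _ _ (Finset.notMem_erase _ _)]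
  rw [Finset.insert_erase hi]
  unfold Alt
  rw [← Finset.sum_sub_distrib, LinearMap.neg_apply, LinearMap.sum_apply, ← Finset.sum_neg_distrib]
  refine Finset.sum_congr rfl fun S hS => ?_
  have hiS : i ∉ S := fun h => Finset.notMem_erase i I (Finset.mem_powerset.1 hS h)
  rw [pw_update S i hiS, pw_update S i hiS, ← Finset.update_piecewise_of_notMem _ _ _ hiS,
    update_self, hg]
  have h0 : S.piecewise x 0 = update (S.piecewise x 0) i 0 := by
    funext j
    by_cases hj : j = i
    · subst hj; simp [hiS]
    · simp [update_of_ne hj]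
  have h1 := hg S 0
  rw [← h0, map_zero, zero_add] at h1
  rw [h1, LinearMap.smul_apply, ← smul_sub, ← smul_neg]
  congr 1
  abel

theorem cmp_ml (f : (∀ i, G i) → H) (hf : IsMultiaffine F f) (I : Finset ι) :
    MLOn F I (cmp I f) := by
  refine ⟨fun i hi x v => ?_, fun i hi x v w => ?_, fun i hi x t v => ?_⟩
  · unfold cmp Alt
    congr 1
    refine Finset.sum_congr rfl fun S hS => ?_
    rw [pw_update S i (fun h => hi (Finset.mem_powerset.1 hS h))]
  · obtain ⟨L, hL⟩ := Alt_lin f hf I i hi x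
    simp only [cmp, hL, map_add, smul_add]
  · obtain ⟨L, hL⟩ := Alt_lin f hf I i hi x
    simp only [cmp, hL, map_smul]
    rw [smul_comm]

theorem multiaffine_pi {s : Type} (β : (∀ i, G i) → s → F)
    (hβ : ∀ t, ∃ J, MLOn F J (fun x => β x t)) : IsMultiaffine F β := by
  intro i x
  have : ∀ t, ∃ (g : G i →ₗ[F] F) (h : F), ∀ y, β (update x i y) t = g y + h := by
    intro t
    obtain ⟨J, hJ⟩ := hβ t
    by_cases hi : i ∈ J
    · exact ⟨{ toFun := fun y => β (update x i y) t
               map_add' := fun v w => hJ.2.1 i hi x v w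
               map_smul' := fun a v => hJ.2.2 i hi x a v }, 0, fun y => by simp⟩
    · exact ⟨0, β x t, fun y => by simpa using hJ.1 i hi x y⟩
  choose g h hg using this
  exact ⟨LinearMap.pi g, h, fun y => by funext t; simp [hg]⟩
end Dec
end IAV

theorem inner_approximation_of_varieties :
    ∀ k : ℕ, 0 < k → ∃ C D : ℝ, 0 < C ∧ 0 < D ∧
      ∀ (𝔽 : Type) [Field 𝔽] [Fintype 𝔽]
        (G : Fin k → Type) [∀ i, AddCommGroup (G i)] [∀ i, Module 𝔽 (G i)]
        [∀ i, Fintype (G i)] [∀ i, FiniteDimensional 𝔽 (G i)]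
        (H : Type) [AddCommGroup H] [Module 𝔽 H] [FiniteDimensional 𝔽 H]
        (ε : ℝ), 0 < ε →
      ∀ (r : ℕ) (B : Fin r → ((∀ i, G i) → H)), (∀ i, IsMultiaffine 𝔽 (B i)) →
      ∃ s : ℕ,
        (s : ℝ) ≤ C * ((r : ℝ) *
          Real.logb (Fintype.card 𝔽) ((Fintype.card 𝔽 : ℝ) * ε⁻¹)) ^ D ∧
        ∃ β : (∀ i, G i) → (Fin s → 𝔽), IsMultiaffine 𝔽 β ∧
          ∀ lam : Fin r → 𝔽,
            ∃ (m : ℕ) (μ : Fin m → (Fin s → 𝔽)),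
              (∀ j, {x : ∀ i, G i | β x = μ j} ⊆ {x | ∑ i, lam i • B i x = 0}) ∧
              (Nat.card ↥({x : ∀ i, G i | ∑ i, lam i • B i x = 0} \
                  ⋃ j, {x : ∀ i, G i | β x = μ j}) : ℝ)
                ≤ ε * Fintype.card (∀ i, G i) := by
  classical
  intro k hk
  obtain ⟨C, D, hM⟩ := IAV.main_all (Fin k) Finset.univ (fun _ _ _ _ => Finset.mem_univ _)
  refine ⟨(C : ℝ) * (2 ^ (k+2)) ^ D + 1, ((2 * (D+1) : ℕ) : ℝ), by positivity, by positivity, ?_⟩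
  intro 𝔽 _ _ G _ _ _ _ H _ _ _ ε hε r B hB
  have hq : 1 < Fintype.card 𝔽 := Fintype.one_lt_card
  have hqR : (1:ℝ) < Fintype.card 𝔽 := by exact_mod_cast hq
  set L := Real.logb (Fintype.card 𝔽) ((Fintype.card 𝔽 : ℝ) * ε⁻¹) with hL
  have hcardG : (0:ℝ) < Fintype.card (∀ i, G i) := by exact_mod_cast Fintype.card_pos
  rw [Real.rpow_natCast]
  have hev : 0 ≤ ((r:ℝ) * L) ^ (2 * (D+1)) := by
    rw [pow_mul]; positivity
  have hnn : 0 ≤ ((C : ℝ) * (2 ^ (k+2)) ^ D + 1) * ((r:ℝ) * L) ^ (2 * (D+1)) :=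
    mul_nonneg (by positivity) hev
  rcases Nat.eq_zero_or_pos r with hr | hr
  · subst hr
    refine ⟨0, (Nat.cast_zero (R := ℝ)).le.trans hnn, fun _ => 0, ?_, fun lam => ⟨1, fun _ => 0, ?_, ?_⟩⟩
    · exact IAV.multiaffine_pi _ (fun t => t.elim0)
    · intro j x _; simp
    · simp
      rw [Set.iUnion_const, Set.sdiff_self, Set.ncard_empty, Nat.cast_zero]
      positivity
  by_cases hε1 : 1 ≤ ε
  · refine ⟨0, (Nat.cast_zero (R := ℝ)).le.trans hnn, fun _ => 0, ?_, fun lam => ⟨0, fun _ => 0, ?_, ?_⟩⟩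
    · exact IAV.multiaffine_pi _ (fun t => t.elim0)
    · intro j; exact j.elim0
    · refine le_trans ?_ (le_mul_of_one_le_left hcardG.le hε1)
      have := Nat.card_le_card_of_injective (Subtype.val : ↥({x : ∀ i, G i | ∑ i, lam i • B i x = 0} \
                  ⋃ j : Fin 0, {x : ∀ i, G i | (fun _ => 0 : (∀ i, G i) → Fin 0 → 𝔽) x = (fun _ => 0 : Fin 0 → Fin 0 → 𝔽) j}) → _)
        Subtype.val_injective
      rw [Nat.card_eq_fintype_card (α := ∀ i, G i)] at this
      exact_mod_cast this
  push Not at hε1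
  -- the main case
  set l := Real.logb (Fintype.card 𝔽) ε⁻¹ with hl
  have hLl : L = 1 + l := by
    rw [hL, Real.logb_mul (by positivity) (by positivity), Real.logb_self_eq_one hqR]
  have hinv : 1 < ε⁻¹ := (one_lt_inv₀ hε).2 hε1
  have hl0 : 0 < l := Real.logb_pos hqR hinv
  let e := ⌈l⌉₊
  have he1 : (e : ℝ) + 1 ≤ 2 * L := by
    have := Nat.ceil_lt_add_one hl0.le
    rw [hLl]
    simp only [e]
    linarith
  have he2 : ε⁻¹ ≤ (Fintype.card 𝔽 : ℝ) ^ e := by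
    have h1 : l ≤ e := Nat.le_ceil l
    have h2 := (Real.logb_le_iff_le_rpow hqR (by positivity)).1 h1
    rwa [Real.rpow_natCast] at h2
  obtain ⟨σ, _, β, hσ, hβ, happ⟩ := hM 𝔽 G H (Fin r × Finset (Fin k)) (fun p => p.2)
    (fun p => IAV.cmp p.2 (B p.1)) (fun _ => Finset.mem_univ _)
    (fun p => IAV.cmp_ml _ (hB p.1) _) e
  let E := Fintype.equivFin σ
  refine ⟨Fintype.card σ, ?_, fun x t => β x (E.symm t), ?_, ?_⟩
  · have hr1 : (1:ℝ) ≤ r := by exact_mod_cast hr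
    have hL1 : 1 ≤ L := by rw [hLl]; linarith
    have hrL : 1 ≤ (r:ℝ) * L := by nlinarith
    have h1 : (Fintype.card σ : ℝ) ≤ (C * ((Fintype.card (Fin r × Finset (Fin k)) + 1) * (e + 1)) ^ D : ℕ) := by
      exact_mod_cast hσ
    have h2 : ((Fintype.card (Fin r × Finset (Fin k)) : ℕ) : ℝ) + 1 ≤ 2^(k+1) * r := by
      simp only [Fintype.card_prod, Fintype.card_fin, Fintype.card_finset]
      push_cast
      have : (1:ℝ) ≤ 2^k := one_le_pow₀ (by norm_num)
      rw [pow_succ]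
      nlinarith
    have h3 : (((Fintype.card (Fin r × Finset (Fin k)) : ℕ) : ℝ) + 1) * (e + 1) ≤ 2^(k+2) * (r * L) := by
      calc _ ≤ (2^(k+1) * (r:ℝ)) * (2 * L) := by gcongr
        _ = _ := by ring
    calc (Fintype.card σ : ℝ) ≤ _ := h1
      _ = C * ((((Fintype.card (Fin r × Finset (Fin k)) : ℕ) : ℝ) + 1) * (e + 1)) ^ D := by push_cast; ring
      _ ≤ C * (2^(k+2) * (r * L)) ^ D := by gcongr
      _ = C * (2^(k+2)) ^ D * (r * L) ^ D := by rw [mul_pow]; ring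
      _ ≤ (C * (2^(k+2)) ^ D + 1) * (r * L) ^ (2 * (D+1)) := by
        gcongr
        · linarith
        · omega
  · exact IAV.multiaffine_pi _ (fun t => hβ _)
  · intro lam
    obtain ⟨S, hS1, hS2⟩ := happ (fun p => lam p.1)
    have hsum : ∀ x, ∑ p : Fin r × Finset (Fin k), lam p.1 • IAV.cmp p.2 (B p.1) x =
        ∑ j, lam j • B j x := by
      intro x
      rw [Fintype.sum_prod_type]
      refine Finset.sum_congr rfl fun j _ => ?_
      simp only
      rw [← Finset.smul_sum, IAV.sum_cmp]
    simp only [hsum] at hS1 hS2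
    refine ⟨S.card, fun j t => (S.equivFin.symm j).1 (E.symm t), ?_, ?_⟩
    · intro j x hx
      simp only [Set.mem_ofPred_eq] at hx ⊢
      apply hS1
      have : β x = (S.equivFin.symm j).1 := by
        funext t
        have := congrFun hx (E t)
        simpa using this
      rw [this]
      exact (S.equivFin.symm j).2
    · have hsub : ({x : ∀ i, G i | ∑ i, lam i • B i x = 0} \
                  ⋃ j, {x : ∀ i, G i | (fun t => β x (E.symm t)) =
                    fun t => (S.equivFin.symm j).1 (E.symm t)}) ⊆
          ((Finset.univ.filter fun x => ∑ j, lam j • B j x = 0 ∧ β x ∉ S : Finset (∀ i, G i)) :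
            Set (∀ i, G i)) := by
        rintro x ⟨hx1, hx2⟩
        simp only [Set.mem_ofPred_eq] at hx1
        simp only [Finset.coe_filter, Finset.mem_univ, true_and, Set.mem_ofPred_eq]
        refine ⟨hx1, fun hxS => hx2 ?_⟩
        rw [Set.mem_iUnion]
        refine ⟨S.equivFin ⟨β x, hxS⟩, ?_⟩
        simp
      have h1 := Set.ncard_le_ncard hsub (Set.toFinite _)
      rw [Set.ncard_coe_finset] at h1
      rw [Nat.card_coe_set_eq]
      have h2 := (Nat.mul_le_mul_right (Fintype.card 𝔽 ^ e) h1).trans (by convert hS2)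
      have h3 : (Set.ncard ({x : ∀ i, G i | ∑ i, lam i • B i x = 0} \
                  ⋃ j, {x : ∀ i, G i | (fun t => β x (E.symm t)) =
                    fun t => (S.equivFin.symm j).1 (E.symm t)}) : ℝ) * (Fintype.card 𝔽 : ℝ) ^ e ≤
          Fintype.card (∀ i, G i) := by exact_mod_cast h2
      have h4 := (mul_le_mul_of_nonneg_left he2 (Nat.cast_nonneg _)).trans h3
      rw [← div_eq_mul_inv, div_le_iff₀ hε] at h4
      rw [mul_comm]
      exact h4
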